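/- Downward closure after exch: suppose that for each hypothesis e ≤ f ∈ H either e = 1 or e = a for some letter a ∈ Σ, and let L ⊆ SP. If U, V ∈ SP with U ⊑^sp V and V ∈ cl_H(cl_exch(L)), then U ∈ cl_H(cl_exch(L)). -/

import Mathlib

namespace CKAH

open Classical

/-! ### Labelled posets and pomsets -/

/-- A labelled poset over alphabet `A`: a finite carrier with a partial order and labelling. -/
structure LPoset (A : Type) : Type 1 where
  carrier : Type
  [fin : Fintype carrier]
  [ord : PartialOrder carrier]
  lab : carrier → A

attribute [instance] LPoset.fin LPoset.ord

/-- Isomorphism of labelled posets: an order isomorphism preserving labels. -/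
def LPoset.Iso {A : Type} (u v : LPoset A) : Prop :=
  ∃ e : u.carrier ≃o v.carrier, ∀ x, v.lab (e x) = u.lab x

theorem LPoset.iso_equivalence (A : Type) : Equivalence (LPoset.Iso (A := A)) where
  refl u := ⟨OrderIso.refl _, fun _ => rfl⟩
  symm := by
    rintro u v ⟨e, he⟩
    exact ⟨e.symm, fun x => by rw [← he (e.symm x), OrderIso.apply_symm_apply]⟩
  trans := by
    rintro u v w ⟨e, he⟩ ⟨f, hf⟩
    exact ⟨e.trans f, fun x => by rw [OrderIso.trans_apply, hf, he]⟩

instance pomSetoid (A : Type) : Setoid (LPoset A) := ⟨LPoset.Iso, LPoset.iso_equivalence A⟩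

/-- A pomset is an isomorphism class of labelled posets. -/
def Pomset (A : Type) : Type 1 := Quotient (pomSetoid A)

/-- Sequential composition of labelled posets: disjoint union, everything on the left
below everything on the right (lexicographic sum order). -/
def LPoset.seqL {A : Type} (u v : LPoset A) : LPoset A where
  carrier := u.carrier ⊕ₗ v.carrier
  fin := inferInstanceAs (Fintype (u.carrier ⊕ v.carrier))
  lab := fun x => Sum.elim u.lab v.lab (ofLex x)

/-- Parallel composition of labelled posets: disjoint union with no cross ordering. -/
def LPoset.parL {A : Type} (u v : LPoset A) : LPoset A where
  carrier := u.carrier ⊕ v.carrier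
  lab := Sum.elim u.lab v.lab

def Pomset.seq {A : Type} : Pomset A → Pomset A → Pomset A :=
  Quotient.map₂ LPoset.seqL (by
    rintro u₁ u₂ ⟨e, he⟩ v₁ v₂ ⟨f, hf⟩
    refine ⟨(RelIso.sumLexCongr e f :
      (u₁.carrier ⊕ₗ v₁.carrier) ≃o (u₂.carrier ⊕ₗ v₂.carrier)), ?_⟩
    rintro (x | x)
    · exact he x
    · exact hf x)

/-- Order isomorphism between disjoint-union orders, from component isomorphisms. -/
def sumOrderIso {α β γ δ : Type} [PartialOrder α] [PartialOrder β] [PartialOrder γ]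
    [PartialOrder δ] (e : α ≃o γ) (f : β ≃o δ) : (α ⊕ β) ≃o (γ ⊕ δ) where
  toEquiv := Equiv.sumCongr e.toEquiv f.toEquiv
  map_rel_iff' := by
    rintro (x | x) (y | y) <;> simp [Sum.le_def, e.le_iff_le, f.le_iff_le]

def Pomset.par {A : Type} : Pomset A → Pomset A → Pomset A :=
  Quotient.map₂ LPoset.parL (by
    rintro u₁ u₂ ⟨e, he⟩ v₁ v₂ ⟨f, hf⟩
    refine ⟨sumOrderIso e f, ?_⟩
    rintro (x | x)
    · exact he x
    · exact hf x)

def LPoset.emptyL (A : Type) : LPoset A := { carrier := Fin 0, lab := fun x => x.elim0 }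

def LPoset.singleL {A : Type} (a : A) : LPoset A := { carrier := PUnit, lab := fun _ => a }

/-- The empty pomset `1`. -/
def Pomset.empty (A : Type) : Pomset A := ⟦LPoset.emptyL A⟧

/-- The single-letter pomset. -/
def Pomset.single {A : Type} (a : A) : Pomset A := ⟦LPoset.singleL a⟧

/-- Subsumption on labelled posets: `u ⊑ v` iff there is a label-preserving
order-preserving bijection from the carrier of `v` to that of `u`. -/
def LPoset.subL {A : Type} (u v : LPoset A) : Prop :=
  ∃ h : v.carrier ≃ u.carrier,
    (∀ x, u.lab (h x) = v.lab x) ∧ ∀ x y : v.carrier, x ≤ y → h x ≤ h y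

/-- Subsumption of pomsets: `Pomset.sub U V` means `U ⊑ V`. -/
def Pomset.sub {A : Type} : Pomset A → Pomset A → Prop :=
  Quotient.lift₂ LPoset.subL (by
    rintro u₁ v₁ u₂ v₂ ⟨e, he⟩ ⟨f, hf⟩
    refine propext ⟨?_, ?_⟩
    · rintro ⟨h, hl, hm⟩
      refine ⟨(f.toEquiv.symm.trans h).trans e.toEquiv, fun x => ?_, fun x y hxy => ?_⟩
      · show u₂.lab (e (h (f.symm x))) = v₂.lab x
        rw [he, hl, ← hf (f.symm x), OrderIso.apply_symm_apply]
      · simp only [Equiv.trans_apply]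
        exact e.le_iff_le.mpr (hm _ _ (f.symm.le_iff_le.mpr hxy))
    · rintro ⟨h, hl, hm⟩
      refine ⟨(f.toEquiv.trans h).trans e.toEquiv.symm, fun x => ?_, fun x y hxy => ?_⟩
      · show u₁.lab (e.symm (h (f x))) = v₁.lab x
        rw [← he (e.symm (h (f x))), OrderIso.apply_symm_apply, hl, hf]
      · simp only [Equiv.trans_apply]
        exact e.symm.le_iff_le.mpr (hm _ _ (f.le_iff_le.mpr hxy)))

def LPoset.isWordL {A : Type} (u : LPoset A) : Prop := ∀ x y : u.carrier, x ≤ y ∨ y ≤ x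

/-- A pomset is a word when it is totally ordered. -/
def Pomset.IsWord {A : Type} : Pomset A → Prop :=
  Quotient.lift LPoset.isWordL (by
    rintro u v ⟨e, -⟩
    refine propext ⟨fun h x y => ?_, fun h x y => ?_⟩
    · rcases h (e.symm x) (e.symm y) with h' | h'
      · exact Or.inl (e.symm.le_iff_le.mp h')
      · exact Or.inr (e.symm.le_iff_le.mp h')
    · rcases h (e x) (e y) with h' | h'
      · exact Or.inl (e.le_iff_le.mp h')
      · exact Or.inr (e.le_iff_le.mp h'))

def LPoset.mapL {A B : Type} (f : A → B) (u : LPoset A) : LPoset B :=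
  { carrier := u.carrier, lab := f ∘ u.lab }

/-- Relabelling of pomsets along a function on letters. -/
def Pomset.map {A B : Type} (f : A → B) : Pomset A → Pomset B :=
  Quotient.map (LPoset.mapL f)
    (by rintro u v ⟨e, he⟩; exact ⟨e, fun x => congrArg f (he x)⟩)

def LPoset.overL {A : Type} (Γ : Set A) (u : LPoset A) : Prop := ∀ x, u.lab x ∈ Γ

/-- All labels of the pomset belong to `Γ`. -/
def Pomset.Over {A : Type} (Γ : Set A) : Pomset A → Prop :=
  Quotient.lift (LPoset.overL Γ) (by
    rintro u v ⟨e, he⟩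
    refine propext ⟨fun h x => ?_, fun h x => ?_⟩
    · have h2 := he (e.symm x)
      rw [OrderIso.apply_symm_apply] at h2
      rw [h2]; exact h _
    · rw [← he x]; exact h _)

/-- Series-parallel pomsets. -/
inductive Pomset.IsSP {A : Type} : Pomset A → Prop
  | empty : Pomset.IsSP (Pomset.empty A)
  | single (a : A) : Pomset.IsSP (Pomset.single a)
  | seq {U V : Pomset A} : Pomset.IsSP U → Pomset.IsSP V → Pomset.IsSP (Pomset.seq U V)
  | par {U V : Pomset A} : Pomset.IsSP U → Pomset.IsSP V → Pomset.IsSP (Pomset.par U V)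

def SPset (A : Type) : Set (Pomset A) := {U | U.IsSP}

/-! ### Pomset contexts -/

/-- Contexts are pomsets over `Option A`, where `none` plays the role of `*`.
`uniqueStarL` says there is exactly one `*`-labelled node. -/
def LPoset.uniqueStarL {A : Type} (c : LPoset (Option A)) : Prop := ∃! x, c.lab x = none

theorem LPoset.uniqueStarL_congr {A : Type} {u v : LPoset (Option A)}
    (e : u.carrier ≃o v.carrier) (he : ∀ x, v.lab (e x) = u.lab x) :
    u.uniqueStarL ↔ v.uniqueStarL := by
  constructor
  · rintro ⟨x, hx, hux⟩
    refine ⟨e x, show v.lab (e x) = none by rw [he]; exact hx, fun y hy => ?_⟩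
    have h2 := he (e.symm y)
    rw [OrderIso.apply_symm_apply] at h2
    have h3 : e.symm y = x := hux _ (h2.symm.trans hy)
    rw [← h3, OrderIso.apply_symm_apply]
  · rintro ⟨x, hx, hvx⟩
    refine ⟨e.symm x, ?_, fun y hy => ?_⟩
    · show u.lab (e.symm x) = none
      have h2 := he (e.symm x)
      rw [OrderIso.apply_symm_apply] at h2
      rw [← h2]; exact hx
    · have h3 : e y = x := hvx _ (show v.lab (e y) = none by rw [he]; exact hy)
      rw [← h3, OrderIso.symm_apply_apply]

/-- A pomset context: exactly one node labelled `*`. -/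
def Pomset.IsCtx {A : Type} : Pomset (Option A) → Prop :=
  Quotient.lift LPoset.uniqueStarL
    (fun _ _ h => propext (LPoset.uniqueStarL_congr h.choose h.choose_spec))

/-- Series-parallel pomset contexts. -/
def Pomset.IsSPCtx {A : Type} (C : Pomset (Option A)) : Prop := C.IsCtx ∧ C.IsSP

/-- Sequential (totally ordered) pomset contexts. -/
def Pomset.IsSeqCtx {A : Type} (C : Pomset (Option A)) : Prop := C.IsCtx ∧ C.IsWord

/-- The trivial context `*`. -/
def starCtx (A : Type) : Pomset (Option A) := Pomset.single (none : Option A)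

theorem option_get_eq_get {α : Type} {o₁ o₂ : Option α} (h : o₁ = o₂) (h₁ : o₁.isSome)
    (h₂ : o₂.isSome) : o₁.get h₁ = o₂.get h₂ := by subst h; rfl

/-- The order of `C[U]`: the orders of `C` (restricted away from `*`) and of `U`, with a
point of `C` below (resp. above) all of `U` when it is below (resp. above) the unique
`*`-node of `C`.  (For well-definedness of the order, the cross-relations are guarded by
the requirement that the star node is unique, which holds for every genuine context.) -/
def LPoset.insLe {A : Type} (c : LPoset (Option A)) (u : LPoset A) :
    ({x : c.carrier // c.lab x ≠ none} ⊕ u.carrier) →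
    ({x : c.carrier // c.lab x ≠ none} ⊕ u.carrier) → Prop
  | Sum.inl x, Sum.inl y => x.val ≤ y.val
  | Sum.inr x, Sum.inr y => x ≤ y
  | Sum.inl x, Sum.inr _ => c.uniqueStarL ∧ ∃ s, c.lab s = none ∧ x.val ≤ s
  | Sum.inr _, Sum.inl y => c.uniqueStarL ∧ ∃ s, c.lab s = none ∧ s ≤ y.val

/-- Insertion of a labelled poset `u` into the gap of a context `c`: the `*`-labelled
node is removed and `u` is put in its place, inheriting the order relations of `*`. -/
noncomputable def LPoset.insL {A : Type} (c : LPoset (Option A)) (u : LPoset A) :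
    LPoset A where
  carrier := {x : c.carrier // c.lab x ≠ none} ⊕ u.carrier
  fin := by classical exact inferInstance
  ord :=
    { le := LPoset.insLe c u
      lt := fun p q => LPoset.insLe c u p q ∧ ¬ LPoset.insLe c u q p
      lt_iff_le_not_ge := fun _ _ => Iff.rfl
      le_refl := by rintro (x | x) <;> exact le_refl _
      le_trans := by
        rintro (x | x) (y | y) (z | z) h1 h2
        · exact le_trans h1 h2
        · obtain ⟨hu, s, hs, hys⟩ := h2
          exact ⟨hu, s, hs, le_trans h1 hys⟩
        · obtain ⟨hu, s, hs, hxs⟩ := h1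
          obtain ⟨-, t, ht, htz⟩ := h2
          obtain ⟨w, hw, huniq⟩ := hu
          have hst : s = t := (huniq s hs).trans (huniq t ht).symm
          exact le_trans (hst ▸ hxs) htz
        · exact h1
        · obtain ⟨hu, s, hs, hsy⟩ := h1
          exact ⟨hu, s, hs, le_trans hsy h2⟩
        · obtain ⟨hu, s, hs, hsy⟩ := h1
          obtain ⟨-, t, ht, hyt⟩ := h2
          obtain ⟨w, hw, huniq⟩ := hu
          have hst : s = t := (huniq s hs).trans (huniq t ht).symm
          have hy : y.val = s := le_antisymm (hst.symm ▸ hyt) hsy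
          exact absurd (hy.symm ▸ hs) y.prop
        · exact h2
        · exact le_trans h1 h2
      le_antisymm := by
        rintro (x | x) (y | y) h1 h2
        · exact congrArg Sum.inl (Subtype.ext (le_antisymm h1 h2))
        · obtain ⟨hu, s, hs, hxs⟩ := h1
          obtain ⟨-, t, ht, htx⟩ := h2
          obtain ⟨w, hw, huniq⟩ := hu
          have hst : s = t := (huniq s hs).trans (huniq t ht).symm
          have hx : x.val = s := le_antisymm hxs (hst.symm ▸ htx)
          exact absurd (hx.symm ▸ hs) x.prop
        · obtain ⟨hu, s, hs, hsy⟩ := h1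
          obtain ⟨-, t, ht, hyt⟩ := h2
          obtain ⟨w, hw, huniq⟩ := hu
          have hst : s = t := (huniq s hs).trans (huniq t ht).symm
          have hy : y.val = s := le_antisymm (hst.symm ▸ hyt) hsy
          exact absurd (hy.symm ▸ hs) y.prop
        · exact congrArg Sum.inr (le_antisymm h1 h2) }
  lab := Sum.elim (fun x => (c.lab x.val).get (Option.isSome_iff_ne_none.mpr x.prop)) u.lab

/-- `Pomset.ins C U` is `C[U]`: plugging the pomset `U` into the gap of the context `C`. -/
noncomputable def Pomset.ins {A : Type} : Pomset (Option A) → Pomset A → Pomset A :=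
  Quotient.map₂ LPoset.insL (by
    rintro c₁ c₂ ⟨e, he⟩ u₁ u₂ ⟨f, hf⟩
    have hstar : c₁.uniqueStarL ↔ c₂.uniqueStarL := LPoset.uniqueStarL_congr e he
    refine ⟨{ toEquiv := Equiv.sumCongr
                (e.toEquiv.subtypeEquiv fun x => by
                  rw [show c₂.lab (e.toEquiv x) = c₁.lab x from he x]) f.toEquiv
              map_rel_iff' := ?_ }, ?_⟩
    · rintro (x | x) (y | y)
      · exact e.le_iff_le
      · show (c₂.uniqueStarL ∧ ∃ s, c₂.lab s = none ∧ (e x.val : c₂.carrier) ≤ s) ↔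
             (c₁.uniqueStarL ∧ ∃ s, c₁.lab s = none ∧ x.val ≤ s)
        constructor
        · rintro ⟨hu, s, hs, hxs⟩
          refine ⟨hstar.mpr hu, e.symm s, ?_, ?_⟩
          · have h2 := he (e.symm s)
            rw [OrderIso.apply_symm_apply] at h2
            rw [← h2]; exact hs
          · exact e.le_iff_le.mp (by rw [OrderIso.apply_symm_apply]; exact hxs)
        · rintro ⟨hu, s, hs, hxs⟩
          exact ⟨hstar.mp hu, e s, by rw [he]; exact hs, e.le_iff_le.mpr hxs⟩
      · show (c₂.uniqueStarL ∧ ∃ s, c₂.lab s = none ∧ s ≤ (e y.val : c₂.carrier)) ↔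
             (c₁.uniqueStarL ∧ ∃ s, c₁.lab s = none ∧ s ≤ y.val)
        constructor
        · rintro ⟨hu, s, hs, hsy⟩
          refine ⟨hstar.mpr hu, e.symm s, ?_, ?_⟩
          · have h2 := he (e.symm s)
            rw [OrderIso.apply_symm_apply] at h2
            rw [← h2]; exact hs
          · exact e.le_iff_le.mp (by rw [OrderIso.apply_symm_apply]; exact hsy)
        · rintro ⟨hu, s, hs, hsy⟩
          exact ⟨hstar.mp hu, e s, by rw [he]; exact hs, e.le_iff_le.mpr hsy⟩
      · exact f.le_iff_le
    · rintro (x | x)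
      · exact option_get_eq_get (he x.val) _ _
      · exact hf x)

/-! ### Pomset languages -/

abbrev Lang (A : Type) := Set (Pomset A)

def Lang.seq {A : Type} (L K : Lang A) : Lang A :=
  {W | ∃ U ∈ L, ∃ V ∈ K, W = Pomset.seq U V}

def Lang.par {A : Type} (L K : Lang A) : Lang A :=
  {W | ∃ U ∈ L, ∃ V ∈ K, W = Pomset.par U V}

def Lang.pow {A : Type} (L : Lang A) : ℕ → Lang A
  | 0 => {Pomset.empty A}
  | n + 1 => Lang.seq (Lang.pow L n) L

def Lang.star {A : Type} (L : Lang A) : Lang A := ⋃ n, L.pow n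

/-- Application of a context to a language: `C[L] = {C[U] : U ∈ L}`. -/
def Ctx.img {A : Type} (C : Pomset (Option A)) (L : Lang A) : Lang A :=
  {W | ∃ U ∈ L, W = C.ins U}

/-! ### CKA terms and semantics -/

inductive Term (A : Type) : Type
  | zero : Term A
  | one : Term A
  | var : A → Term A
  | add : Term A → Term A → Term A
  | seq : Term A → Term A → Term A
  | par : Term A → Term A → Term A
  | star : Term A → Term A

/-- Pomset language semantics of CKA terms. -/
def Term.lang {A : Type} : Term A → Lang A
  | .zero => ∅
  | .one => {Pomset.empty A}
  | .var a => {Pomset.single a}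
  | .add e f => e.lang ∪ f.lang
  | .seq e f => Lang.seq e.lang f.lang
  | .par e f => Lang.par e.lang f.lang
  | .star e => Lang.star e.lang

/-- Sets of hypotheses: a hypothesis `e ≤ f` is the pair `(e, f)`. -/
abbrev HypSet (A : Type) := Set (Term A × Term A)

/-- The congruence `≡^H` on CKA terms generated by the CKA axioms and the hypotheses `H`
(the constructor `hyp` encodes `e ≦^H f`, i.e. `e + f ≡^H f`, for `e ≤ f ∈ H`). -/
inductive CongH {A : Type} (H : HypSet A) : Term A → Term A → Prop
  | refl (e) : CongH H e e
  | symm {e f} : CongH H e f → CongH H f e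
  | trans {e f g} : CongH H e f → CongH H f g → CongH H e g
  | addCong {e e' f f'} : CongH H e e' → CongH H f f' → CongH H (.add e f) (.add e' f')
  | seqCong {e e' f f'} : CongH H e e' → CongH H f f' → CongH H (.seq e f) (.seq e' f')
  | parCong {e e' f f'} : CongH H e e' → CongH H f f' → CongH H (.par e f) (.par e' f')
  | starCong {e e'} : CongH H e e' → CongH H (.star e) (.star e')
  | addZero (e) : CongH H (.add e .zero) e
  | addIdem (e) : CongH H (.add e e) e
  | addComm (e f) : CongH H (.add e f) (.add f e)
  | addAssoc (e f g) : CongH H (.add e (.add f g)) (.add (.add e f) g)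
  | seqAssoc (e f g) : CongH H (.seq e (.seq f g)) (.seq (.seq e f) g)
  | seqDistL (e f g) : CongH H (.seq e (.add f g)) (.add (.seq e f) (.seq e g))
  | seqDistR (e f g) : CongH H (.seq (.add e f) g) (.add (.seq e g) (.seq f g))
  | seqOneR (e) : CongH H (.seq e .one) e
  | seqOneL (e) : CongH H (.seq .one e) e
  | seqZeroR (e) : CongH H (.seq e .zero) .zero
  | seqZeroL (e) : CongH H (.seq .zero e) .zero
  | parComm (e f) : CongH H (.par e f) (.par f e)
  | parOne (e) : CongH H (.par e .one) e
  | parZero (e) : CongH H (.par e .zero) .zero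
  | parAssoc (e f g) : CongH H (.par e (.par f g)) (.par (.par e f) g)
  | parDist (e f g) : CongH H (.par e (.add f g)) (.add (.par e f) (.par e g))
  | starUnfoldL (e) : CongH H (.add .one (.seq e (.star e))) (.star e)
  | starUnfoldR (e) : CongH H (.add .one (.seq (.star e) e)) (.star e)
  | lfpL {e f g} : CongH H (.add (.add e (.seq f g)) g) g →
      CongH H (.add (.seq (.star f) e) g) g
  | lfpR {e f g} : CongH H (.add (.add e (.seq f g)) f) f →
      CongH H (.add (.seq e (.star g)) f) f
  | hyp {e f} : (e, f) ∈ H → CongH H (.add e f) f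

/-- `e ≦^H f`, the natural order `e + f ≡^H f`. -/
def LeH {A : Type} (H : HypSet A) (e f : Term A) : Prop := CongH H (.add e f) f

/-- The `H`-closure of a pomset language, as an inductive predicate: the smallest language
containing `L` such that for all `e ≤ f ∈ H` and series-parallel contexts `C`,
if `C[⟦f⟧] ⊆ cl` then `C[⟦e⟧] ⊆ cl`. -/
inductive closure {A : Type} (H : HypSet A) (L : Lang A) : Pomset A → Prop
  | base {U} : U ∈ L → closure H L U
  | step {e f : Term A} (hef : (e, f) ∈ H) {C : Pomset (Option A)} (hC : C.IsSPCtx)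
      (hf : ∀ V ∈ f.lang, closure H L (C.ins V)) {U} (hU : U ∈ e.lang) :
      closure H L (C.ins U)

/-- `cl H L` is the `H`-closure of `L`. -/
def cl {A : Type} (H : HypSet A) (L : Lang A) : Lang A := {U | closure H L U}

/-- The sequential closure: like `cl` but only sequential contexts are used. -/
inductive seqClosure {A : Type} (H : HypSet A) (L : Lang A) : Pomset A → Prop
  | base {U} : U ∈ L → seqClosure H L U
  | step {e f : Term A} (hef : (e, f) ∈ H) {C : Pomset (Option A)} (hC : C.IsSeqCtx)
      (hf : ∀ V ∈ f.lang, seqClosure H L (C.ins V)) {U} (hU : U ∈ e.lang) :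
      seqClosure H L (C.ins U)

def seqCl {A : Type} (H : HypSet A) (L : Lang A) : Lang A := {U | seqClosure H L U}

/-! ### Implication, completeness, reductions -/

/-- `H` implies `H'`: every hypothesis of `H'` is derivable from `H`. -/
def Implies {A : Type} (H H' : HypSet A) : Prop := ∀ p ∈ H', LeH H p.1 p.2

/-- `H` is complete: semantic equivalence implies axiomatic equivalence. -/
def Complete {A : Type} (H : HypSet A) : Prop :=
  ∀ e f : Term A, cl H e.lang = cl H f.lang → CongH H e f

/-- A reduction from `H` to `H'` (presupposing that `H` implies `H'`). -/
structure IsReduction {A : Type} (H H' : HypSet A) (r : Term A → Term A) : Prop where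
  implies : Implies H H'
  equiv : ∀ e, CongH H e (r e)
  reflect : ∀ e f : Term A, cl H e.lang = cl H f.lang → cl H' (r e).lang = cl H' (r f).lang

def Reduces {A : Type} (H H' : HypSet A) : Prop := ∃ r, IsReduction H H' r

/-- A strong reduction from `H` to `H'`. -/
structure IsStrongReduction {A : Type} (H H' : HypSet A) (r : Term A → Term A)
    extends IsReduction H H' r : Prop where
  strong : ∀ e : Term A, cl H e.lang = cl H' (r e).lang

def StronglyReduces {A : Type} (H H' : HypSet A) : Prop := ∃ r, IsStrongReduction H H' r

/-- `H` factorises into `H₀` and `H₁`. -/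
def Factorises {A : Type} (H H₀ H₁ : HypSet A) : Prop :=
  Implies H H₀ ∧ Implies H H₁ ∧ ∀ L : Lang A, L ⊆ SPset A → cl H L = cl H₁ (cl H₀ L)

/-! ### The exchange hypotheses and sp-subsumption -/

/-- The exchange hypotheses `(e∥f)·(g∥h) ≤ (e·g)∥(f·h)`. -/
def exch (A : Type) : HypSet A :=
  {p | ∃ e f g h : Term A,
    p = (Term.seq (.par e f) (.par g h), Term.par (.seq e g) (.seq f h))}

/-- `⊑^sp`: the smallest precongruence on series-parallel pomsets satisfying the
exchange inequality. -/
inductive spSub {A : Type} : Pomset A → Pomset A → Prop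
  | refl {U : Pomset A} : U.IsSP → spSub U U
  | trans {U V W} : spSub U V → spSub V W → spSub U W
  | seqCong {U V U' V'} : spSub U V → spSub U' V' → spSub (Pomset.seq U U') (Pomset.seq V V')
  | parCong {U V U' V'} : spSub U V → spSub U' V' → spSub (Pomset.par U U') (Pomset.par V V')
  | exch {U V W X : Pomset A} : U.IsSP → V.IsSP → W.IsSP → X.IsSP →
      spSub (Pomset.seq (Pomset.par U V) (Pomset.par W X))
            (Pomset.par (Pomset.seq U W) (Pomset.seq V X))

/-! ### KA terms, grounded hypotheses, sequential reductions -/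

/-- A term is a KA term when it contains no `∥`. -/
def Term.noPar {A : Type} : Term A → Prop
  | .zero => True
  | .one => True
  | .var _ => True
  | .add e f => e.noPar ∧ f.noPar
  | .seq e f => e.noPar ∧ f.noPar
  | .par _ _ => False
  | .star e => e.noPar

/-- A non-empty word. -/
def IsNonemptyWord {A : Type} (W : Pomset A) : Prop := W.IsWord ∧ W ≠ Pomset.empty A

/-- A set of hypotheses is grounded when in each hypothesis `e ≤ f`, `e` is a KA term and
`⟦f⟧ = {W}` for a non-empty word `W`. -/
def Grounded {A : Type} (H : HypSet A) : Prop :=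
  ∀ p ∈ H, p.1.noPar ∧ ∃ W : Pomset A, IsNonemptyWord W ∧ p.2.lang = {W}

/-- `≡_KA^H`: the congruence on terms generated by the axioms of `≡` not involving `∥`
together with the hypotheses of `H`. -/
inductive KACong {A : Type} (H : HypSet A) : Term A → Term A → Prop
  | refl (e) : KACong H e e
  | symm {e f} : KACong H e f → KACong H f e
  | trans {e f g} : KACong H e f → KACong H f g → KACong H e g
  | addCong {e e' f f'} : KACong H e e' → KACong H f f' → KACong H (.add e f) (.add e' f')
  | seqCong {e e' f f'} : KACong H e e' → KACong H f f' → KACong H (.seq e f) (.seq e' f')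
  | starCong {e e'} : KACong H e e' → KACong H (.star e) (.star e')
  | addZero (e) : KACong H (.add e .zero) e
  | addIdem (e) : KACong H (.add e e) e
  | addComm (e f) : KACong H (.add e f) (.add f e)
  | addAssoc (e f g) : KACong H (.add e (.add f g)) (.add (.add e f) g)
  | seqAssoc (e f g) : KACong H (.seq e (.seq f g)) (.seq (.seq e f) g)
  | seqDistL (e f g) : KACong H (.seq e (.add f g)) (.add (.seq e f) (.seq e g))
  | seqDistR (e f g) : KACong H (.seq (.add e f) g) (.add (.seq e g) (.seq f g))
  | seqOneR (e) : KACong H (.seq e .one) e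
  | seqOneL (e) : KACong H (.seq .one e) e
  | seqZeroR (e) : KACong H (.seq e .zero) .zero
  | seqZeroL (e) : KACong H (.seq .zero e) .zero
  | starUnfoldL (e) : KACong H (.add .one (.seq e (.star e))) (.star e)
  | starUnfoldR (e) : KACong H (.add .one (.seq (.star e) e)) (.star e)
  | lfpL {e f g} : KACong H (.add (.add e (.seq f g)) g) g →
      KACong H (.add (.seq (.star f) e) g) g
  | lfpR {e f g} : KACong H (.add (.add e (.seq f g)) f) f →
      KACong H (.add (.seq e (.star g)) f) f
  | hyp {e f} : (e, f) ∈ H → KACong H (.add e f) f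

/-- A sequential reduction from `H` to `H'`. -/
structure IsSeqReduction {A : Type} (H H' : HypSet A) (r : Term A → Term A) : Prop where
  implies : Implies H H'
  equiv : ∀ e : Term A, e.noPar → KACong H e (r e)
  closure_eq : ∀ e : Term A, e.noPar → seqCl H e.lang = seqCl H' (r e).lang

/-- Extension of a map on (KA) terms to all CKA terms, homomorphically on `∥`. -/
def parExt {A : Type} (r : Term A → Term A) : Term A → Term A
  | .par e f => .par (parExt r e) (parExt r f)
  | e => r e

/-! ### Inductive characterisation of sp contexts -/

/-- The generators of series-parallel contexts (Lemma: `PC^sp` is the smallest such set). -/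
inductive GenCtx {A : Type} : Pomset (Option A) → Prop
  | star : GenCtx (Pomset.single (none : Option A))
  | seqL {U : Pomset A} {C} : U.IsSP → GenCtx C → GenCtx (Pomset.seq (Pomset.map some U) C)
  | seqR {C} {V : Pomset A} : GenCtx C → V.IsSP → GenCtx (Pomset.seq C (Pomset.map some V))
  | par {U : Pomset A} {C} : U.IsSP → GenCtx C → GenCtx (Pomset.par (Pomset.map some U) C)

/-! ### Reification -/

/-- Homomorphic extension of a letter map to terms. -/
def rTerm {A : Type} (r : A → Term A) : Term A → Term A
  | .zero => .zero
  | .one => .one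
  | .var a => r a
  | .add e f => .add (rTerm r e) (rTerm r f)
  | .seq e f => .seq (rTerm r e) (rTerm r f)
  | .par e f => .par (rTerm r e) (rTerm r f)
  | .star e => .star (rTerm r e)

/-- All letters of a term lie in `Γ`. -/
def TermOver {A : Type} (Γ : Set A) : Term A → Prop
  | .zero => True
  | .one => True
  | .var a => a ∈ Γ
  | .add e f => TermOver Γ e ∧ TermOver Γ f
  | .seq e f => TermOver Γ e ∧ TermOver Γ f
  | .par e f => TermOver Γ e ∧ TermOver Γ f
  | .star e => TermOver Γ e

/-- Extension of a letter map `r` to (series-parallel) pomsets, as a relation: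
`rMap r U V` means `V ∈ r(U)`. -/
inductive rMap {A : Type} (r : A → Term A) : Pomset A → Pomset A → Prop
  | one : rMap r (Pomset.empty A) (Pomset.empty A)
  | var (a : A) {V} : V ∈ (r a).lang → rMap r (Pomset.single a) V
  | seq {U U' V V'} : rMap r U V → rMap r U' V' →
      rMap r (Pomset.seq U U') (Pomset.seq V V')
  | par {U U' V V'} : rMap r U V → rMap r U' V' →
      rMap r (Pomset.par U U') (Pomset.par V V')

/-- Image of a language under (the pomset extension of) `r`. -/
def rImg {A : Type} (r : A → Term A) (L : Lang A) : Lang A := {V | ∃ U ∈ L, rMap r U V}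

/-- Series-parallel pomsets over the subalphabet `Γ`. -/
def SPover {A : Type} (Γ : Set A) : Lang A := {U | U.IsSP ∧ U.Over Γ}

/-- `r : Σ → Term Γ` is a reification from `H` to `H'`. -/
structure IsReification {A : Type} (Γ : Set A) (H H' : HypSet A) (r : A → Term A) : Prop where
  toGamma : ∀ a : A, TermOver Γ (r a)
  equiv : ∀ a : A, CongH H (r a) (.var a)
  expansive : ∀ a ∈ Γ, LeH (∅ : HypSet A) (.var a) (r a)
  preserves : ∀ L : Lang A, L ⊆ SPover Γ → cl H' L ⊆ SPover Γ
  hyps : ∀ p ∈ H, LeH H' (rTerm r p.1) (rTerm r p.2)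

end CKAH

namespace CKAH

open Classical

/-- Restriction of a labelled poset to a predicate. -/
noncomputable def LPoset.res {A : Type} (w : LPoset A) (p : w.carrier → Prop) : LPoset A where
  carrier := {x : w.carrier // p x}
  fin := by classical exact inferInstance
  lab := fun x => w.lab x.val

noncomputable def rs {A : Type} (w : LPoset A) (p : w.carrier → Prop) : Pomset A := ⟦w.res p⟧

theorem mk_eq_of {A : Type} {u v : LPoset A} (e : u.carrier ≃o v.carrier)
    (he : ∀ x, v.lab (e x) = u.lab x) : (⟦u⟧ : Pomset A) = ⟦v⟧ :=
  Quotient.sound ⟨e, he⟩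

theorem mk_eq_iff {A : Type} {u v : LPoset A} : (⟦u⟧ : Pomset A) = ⟦v⟧ ↔
    ∃ e : u.carrier ≃o v.carrier, ∀ x, v.lab (e x) = u.lab x :=
  ⟨fun h => Quotient.exact h, fun h => Quotient.sound h⟩

/-- Iso from a bijective map reflecting order. -/
theorem mk_eq_of_bij {A : Type} {u v : LPoset A} (f : u.carrier → v.carrier)
    (hs : Function.Surjective f) (hle : ∀ x y, f x ≤ f y ↔ x ≤ y)
    (hl : ∀ x, v.lab (f x) = u.lab x) : (⟦u⟧ : Pomset A) = ⟦v⟧ := by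
  have hi : Function.Injective f := fun x y h =>
    le_antisymm ((hle x y).1 h.le) ((hle y x).1 h.ge)
  exact mk_eq_of ⟨Equiv.ofBijective f ⟨hi, hs⟩, fun {a b} => hle a b⟩ hl

theorem rs_true {A : Type} (w : LPoset A) (p : w.carrier → Prop) (hp : ∀ x, p x) :
    rs w p = ⟦w⟧ :=
  mk_eq_of_bij (u := w.res p) (fun x => x.val) (fun x => ⟨⟨x, hp x⟩, rfl⟩)
    (fun _ _ => Iff.rfl) (fun _ => rfl)

theorem rs_seq {A : Type} (w : LPoset A) (q p₁ p₂ : w.carrier → Prop)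
    (hq : ∀ x, q x ↔ p₁ x ∨ p₂ x) (h : ∀ a b, p₁ a → p₂ b → a < b) :
    rs w q = Pomset.seq (rs w p₁) (rs w p₂) := by
  symm
  refine mk_eq_of_bij (u := LPoset.seqL (w.res p₁) (w.res p₂)) (v := w.res q)
    (fun x => Sum.elim (fun y => ⟨y.val, (hq _).2 (Or.inl y.prop)⟩)
      (fun y => ⟨y.val, (hq _).2 (Or.inr y.prop)⟩) (ofLex x)) ?_ ?_ ?_
  · rintro ⟨x, hx⟩
    rcases (hq x).1 hx with h1 | h1
    · exact ⟨toLex (Sum.inl ⟨x, h1⟩), rfl⟩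
    · exact ⟨toLex (Sum.inr ⟨x, h1⟩), rfl⟩
  · rintro (x | x) (y | y)
    · exact (Sum.Lex.inl_le_inl_iff (a := x) (b := y)).symm
    · exact iff_of_true (h _ _ x.prop y.prop).le (Sum.Lex.inl_le_inr x y)
    · exact iff_of_false (h _ _ y.prop x.prop).not_ge
        (Sum.Lex.not_inr_le_inl (a := y) (b := x))
    · exact (Sum.Lex.inr_le_inr_iff (a := x) (b := y)).symm
  · rintro (x | x) <;> rfl

theorem rs_par {A : Type} (w : LPoset A) (q p₁ p₂ : w.carrier → Prop)
    (hq : ∀ x, q x ↔ p₁ x ∨ p₂ x) (h : ∀ a b, p₁ a → p₂ b → ¬ a ≤ b ∧ ¬ b ≤ a) :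
    rs w q = Pomset.par (rs w p₁) (rs w p₂) := by
  symm
  refine mk_eq_of_bij (u := LPoset.parL (w.res p₁) (w.res p₂)) (v := w.res q)
    (Sum.elim (fun y => ⟨y.val, (hq _).2 (Or.inl y.prop)⟩)
      (fun y => ⟨y.val, (hq _).2 (Or.inr y.prop)⟩)) ?_ ?_ ?_
  · rintro ⟨x, hx⟩
    rcases (hq x).1 hx with h1 | h1
    · exact ⟨Sum.inl ⟨x, h1⟩, rfl⟩
    · exact ⟨Sum.inr ⟨x, h1⟩, rfl⟩
  · rintro (x | x) (y | y)
    · exact (Sum.inl_le_inl_iff (a := x) (b := y)).symm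
    · exact iff_of_false (h _ _ x.prop y.prop).1 Sum.not_inl_le_inr
    · exact iff_of_false (h _ _ y.prop x.prop).2
        (Sum.not_inr_le_inl (a := y) (b := x))
    · exact (Sum.inr_le_inr_iff (a := x) (b := y)).symm
  · rintro (x | x) <;> rfl

theorem exists_rs_seq {A : Type} {w : LPoset A} {U V : Pomset A}
    (hw : ⟦w⟧ = Pomset.seq U V) : ∃ p q : w.carrier → Prop, (∀ x, p x ∨ q x) ∧
      (∀ a b, p a → q b → a < b) ∧ U = rs w p ∧ V = rs w q := by
  induction U using Quotient.inductionOn with | _ u => ?_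
  induction V using Quotient.inductionOn with | _ v => ?_
  obtain ⟨e, he⟩ := mk_eq_iff.1 (show (⟦LPoset.seqL u v⟧ : Pomset A) = ⟦w⟧ from hw.symm)
  refine ⟨fun x => ∃ y, e (toLex (Sum.inl y)) = x, fun x => ∃ y, e (toLex (Sum.inr y)) = x,
    ?_, ?_, ?_, ?_⟩
  · intro x
    obtain ⟨(y | y), rfl⟩ := e.surjective x
    · exact Or.inl ⟨y, rfl⟩
    · exact Or.inr ⟨y, rfl⟩
  · rintro _ _ ⟨a, rfl⟩ ⟨b, rfl⟩
    exact e.lt_iff_lt.2 (Sum.Lex.inl_lt_inr a b)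
  · refine mk_eq_of_bij (v := w.res _) (fun y => ⟨e (toLex (Sum.inl y)), y, rfl⟩) ?_ ?_ ?_
    · rintro ⟨_, y, rfl⟩; exact ⟨y, rfl⟩
    · intro x y
      exact e.le_iff_le.trans (Sum.Lex.inl_le_inl_iff (a := x) (b := y))
    · intro x; exact he _
  · refine mk_eq_of_bij (v := w.res _) (fun y => ⟨e (toLex (Sum.inr y)), y, rfl⟩) ?_ ?_ ?_
    · rintro ⟨_, y, rfl⟩; exact ⟨y, rfl⟩
    · intro x y
      exact e.le_iff_le.trans (Sum.Lex.inr_le_inr_iff (a := x) (b := y))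
    · intro x; exact he _

theorem exists_rs_par {A : Type} {w : LPoset A} {U V : Pomset A}
    (hw : ⟦w⟧ = Pomset.par U V) : ∃ p q : w.carrier → Prop, (∀ x, p x ∨ q x) ∧
      (∀ a b, p a → q b → ¬ a ≤ b ∧ ¬ b ≤ a) ∧ U = rs w p ∧ V = rs w q := by
  induction U using Quotient.inductionOn with | _ u => ?_
  induction V using Quotient.inductionOn with | _ v => ?_
  obtain ⟨e, he⟩ := mk_eq_iff.1 (show (⟦LPoset.parL u v⟧ : Pomset A) = ⟦w⟧ from hw.symm)
  refine ⟨fun x => ∃ y, e (Sum.inl y) = x, fun x => ∃ y, e (Sum.inr y) = x,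
    ?_, ?_, ?_, ?_⟩
  · intro x
    obtain ⟨(y | y), rfl⟩ := e.surjective x
    · exact Or.inl ⟨y, rfl⟩
    · exact Or.inr ⟨y, rfl⟩
  · rintro _ _ ⟨a, rfl⟩ ⟨b, rfl⟩
    exact ⟨fun h => Sum.not_inl_le_inr (e.le_iff_le.1 h),
      fun h => Sum.not_inr_le_inl (e.le_iff_le.1 h)⟩
  · refine mk_eq_of_bij (v := w.res _) (fun y => ⟨e (Sum.inl y), y, rfl⟩) ?_ ?_ ?_
    · rintro ⟨_, y, rfl⟩; exact ⟨y, rfl⟩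
    · intro x y
      exact e.le_iff_le.trans (Sum.inl_le_inl_iff (a := x) (b := y))
    · intro x; exact he _
  · refine mk_eq_of_bij (v := w.res _) (fun y => ⟨e (Sum.inr y), y, rfl⟩) ?_ ?_ ?_
    · rintro ⟨_, y, rfl⟩; exact ⟨y, rfl⟩
    · intro x y
      exact e.le_iff_le.trans (Sum.inr_le_inr_iff (a := x) (b := y))
    · intro x; exact he _

theorem mk_eq_empty {A : Type} {w : LPoset A} (h : w.carrier → False) :
    (⟦w⟧ : Pomset A) = Pomset.empty A :=
  mk_eq_of_bij (v := LPoset.emptyL A) (fun x => (h x).elim) (fun x => x.elim0)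
    (fun x => (h x).elim) (fun x => (h x).elim)

theorem rs_eq_empty {A : Type} {w : LPoset A} {p : w.carrier → Prop} (h : ∀ x, ¬ p x) :
    rs w p = Pomset.empty A := mk_eq_empty (w := w.res p) (fun x => h _ x.prop)

theorem seq_assoc {A : Type} (U V W : Pomset A) :
    Pomset.seq (Pomset.seq U V) W = Pomset.seq U (Pomset.seq V W) := by
  induction U using Quotient.inductionOn with | _ u => ?_
  induction V using Quotient.inductionOn with | _ v => ?_
  induction W using Quotient.inductionOn with | _ w => ?_
  refine mk_eq_of (u := LPoset.seqL (LPoset.seqL u v) w) (v := LPoset.seqL u (LPoset.seqL v w))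
    (OrderIso.sumLexAssoc _ _ _) ?_
  rintro ((x | x) | x) <;> rfl

theorem par_assoc {A : Type} (U V W : Pomset A) :
    Pomset.par (Pomset.par U V) W = Pomset.par U (Pomset.par V W) := by
  induction U using Quotient.inductionOn with | _ u => ?_
  induction V using Quotient.inductionOn with | _ v => ?_
  induction W using Quotient.inductionOn with | _ w => ?_
  refine mk_eq_of (u := LPoset.parL (LPoset.parL u v) w) (v := LPoset.parL u (LPoset.parL v w))
    (OrderIso.sumAssoc _ _ _) ?_
  rintro ((x | x) | x) <;> rfl

theorem par_comm {A : Type} (U V : Pomset A) : Pomset.par U V = Pomset.par V U := by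
  induction U using Quotient.inductionOn with | _ u => ?_
  induction V using Quotient.inductionOn with | _ v => ?_
  refine mk_eq_of (u := LPoset.parL u v) (v := LPoset.parL v u) (OrderIso.sumComm _ _) ?_
  rintro (x | x) <;> rfl

theorem seq_empty {A : Type} (U : Pomset A) : Pomset.seq U (Pomset.empty A) = U := by
  induction U using Quotient.inductionOn with | _ u => ?_
  have := rs_seq u (fun _ => True) (fun _ => True) (fun _ => False) (by simp) (by simp)
  rw [rs_eq_empty (p := fun _ => False) (by simp), rs_true _ _ (by simp)] at this
  exact this.symm

theorem empty_seq {A : Type} (U : Pomset A) : Pomset.seq (Pomset.empty A) U = U := by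
  induction U using Quotient.inductionOn with | _ u => ?_
  have := rs_seq u (fun _ => True) (fun _ => False) (fun _ => True) (by simp) (by simp)
  rw [rs_eq_empty (p := fun _ => False) (by simp), rs_true _ _ (by simp)] at this
  exact this.symm

theorem par_empty {A : Type} (U : Pomset A) : Pomset.par U (Pomset.empty A) = U := by
  induction U using Quotient.inductionOn with | _ u => ?_
  have := rs_par u (fun _ => True) (fun _ => True) (fun _ => False) (by simp) (by simp)
  rw [rs_eq_empty (p := fun _ => False) (by simp), rs_true _ _ (by simp)] at this
  exact this.symm

theorem empty_par {A : Type} (U : Pomset A) : Pomset.par (Pomset.empty A) U = U := by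
  rw [par_comm, par_empty]

theorem seq_eq_empty {A : Type} {U V : Pomset A} (h : Pomset.empty A = Pomset.seq U V) :
    U = Pomset.empty A ∧ V = Pomset.empty A := by
  obtain ⟨p, q, -, -, rfl, rfl⟩ := exists_rs_seq h
  exact ⟨rs_eq_empty fun x => Fin.elim0 x, rs_eq_empty fun x => Fin.elim0 x⟩

theorem par_eq_empty {A : Type} {U V : Pomset A} (h : Pomset.empty A = Pomset.par U V) :
    U = Pomset.empty A ∧ V = Pomset.empty A := by
  obtain ⟨p, q, -, -, rfl, rfl⟩ := exists_rs_par h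
  exact ⟨rs_eq_empty fun x => Fin.elim0 x, rs_eq_empty fun x => Fin.elim0 x⟩

theorem single_ne_empty {A : Type} (a : A) : Pomset.single a ≠ Pomset.empty A := by
  intro h
  obtain ⟨e, -⟩ := mk_eq_iff.1 h
  exact Fin.elim0 (e PUnit.unit)

theorem seq_eq_single {A : Type} {a : A} {U V : Pomset A}
    (h : Pomset.single a = Pomset.seq U V) : U = Pomset.empty A ∨ V = Pomset.empty A := by
  obtain ⟨p, q, h1, h2, rfl, rfl⟩ := exists_rs_seq h
  by_cases hp : p PUnit.unit
  · exact Or.inr (rs_eq_empty fun x hx => lt_irrefl _ (h2 x x hp hx))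
  · exact Or.inl (rs_eq_empty fun x hx => hp hx)

theorem par_eq_single {A : Type} {a : A} {U V : Pomset A}
    (h : Pomset.single a = Pomset.par U V) : U = Pomset.empty A ∨ V = Pomset.empty A := by
  obtain ⟨p, q, h1, h2, rfl, rfl⟩ := exists_rs_par h
  by_cases hp : p PUnit.unit
  · exact Or.inr (rs_eq_empty fun x hx => (h2 x x hp hx).1 le_rfl)
  · exact Or.inl (rs_eq_empty fun x hx => hp hx)

theorem levi {A : Type} {X Z V W : Pomset A} (h : Pomset.seq X Z = Pomset.seq V W) :
    (∃ Y, V = Pomset.seq X Y ∧ Z = Pomset.seq Y W) ∨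
    (∃ Y, X = Pomset.seq V Y ∧ W = Pomset.seq Y Z) := by
  obtain ⟨w, hw⟩ := Quotient.exists_rep (Pomset.seq X Z)
  obtain ⟨p, q, h1, h2, rfl, rfl⟩ := exists_rs_seq hw
  obtain ⟨p', q', h1', h2', rfl, rfl⟩ := exists_rs_seq (hw.trans h)
  have hd : ∀ x, p x → ¬ q x := fun x a b => lt_irrefl _ (h2 x x a b)
  have hd' : ∀ x, p' x → ¬ q' x := fun x a b => lt_irrefl _ (h2' x x a b)
  by_cases hpp : ∀ x, p x → p' x
  · refine Or.inl ⟨rs w (fun x => p' x ∧ q x), rs_seq _ _ _ _ ?_ ?_, rs_seq _ _ _ _ ?_ ?_⟩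
    · intro x; have := hpp x; have := h1 x; tauto
    · intro a b ha hb; exact h2 _ _ ha hb.2
    · intro x; have := hpp x; have := h1 x; have := h1' x; have := hd' x; tauto
    · intro a b ha hb; exact h2' _ _ ha.1 hb
  · push Not at hpp
    obtain ⟨a, ha, ha'⟩ := hpp
    have hqa : q' a := (h1' a).resolve_left ha'
    have hpp : ∀ x, p' x → p x := by
      intro b hb
      by_contra hb'
      exact lt_asymm (h2 a b ha ((h1 b).resolve_left hb')) (h2' b a hb hqa)
    refine Or.inr ⟨rs w (fun x => p x ∧ q' x), rs_seq _ _ _ _ ?_ ?_, rs_seq _ _ _ _ ?_ ?_⟩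
    · intro x; have := hpp x; have := h1' x; tauto
    · intro a b ha hb; exact h2' _ _ ha hb.2
    · intro x; have := hpp x; have := h1 x; have := h1' x; have := hd x; tauto
    · intro a b ha hb; exact h2 _ _ ha.1 hb

theorem par_refine {A : Type} {X Z V W : Pomset A} (h : Pomset.par X Z = Pomset.par V W) :
    ∃ X₁ X₂ Z₁ Z₂, X = Pomset.par X₁ X₂ ∧ Z = Pomset.par Z₁ Z₂ ∧
      V = Pomset.par X₁ Z₁ ∧ W = Pomset.par X₂ Z₂ := by
  obtain ⟨w, hw⟩ := Quotient.exists_rep (Pomset.par X Z)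
  obtain ⟨p, q, h1, h2, rfl, rfl⟩ := exists_rs_par hw
  obtain ⟨p', q', h1', h2', rfl, rfl⟩ := exists_rs_par (hw.trans h)
  refine ⟨rs w (fun x => p x ∧ p' x), rs w (fun x => p x ∧ q' x), rs w (fun x => q x ∧ p' x),
    rs w (fun x => q x ∧ q' x), rs_par _ _ _ _ ?_ ?_, rs_par _ _ _ _ ?_ ?_,
    rs_par _ _ _ _ ?_ ?_, rs_par _ _ _ _ ?_ ?_⟩
  · intro x; have := h1' x; tauto
  · intro a b ha hb; exact h2' _ _ ha.2 hb.2
  · intro x; have := h1' x; tauto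
  · intro a b ha hb; exact h2' _ _ ha.2 hb.2
  · intro x; have := h1 x; tauto
  · intro a b ha hb; exact h2 _ _ ha.1 hb.1
  · intro x; have := h1 x; tauto
  · intro a b ha hb; exact h2 _ _ ha.1 hb.1

theorem par_eq_seq {A : Type} {X Z V W : Pomset A} (h : Pomset.par X Z = Pomset.seq V W) :
    X = Pomset.empty A ∨ Z = Pomset.empty A ∨ V = Pomset.empty A ∨ W = Pomset.empty A := by
  obtain ⟨w, hw⟩ := Quotient.exists_rep (Pomset.par X Z)
  obtain ⟨p, q, h1, h2, rfl, rfl⟩ := exists_rs_par hw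
  obtain ⟨p', q', h1', h2', rfl, rfl⟩ := exists_rs_seq (hw.trans h)
  by_contra hne
  push Not at hne
  obtain ⟨n1, n2, n3, n4⟩ := hne
  have ex : ∀ {r : w.carrier → Prop}, rs w r ≠ Pomset.empty A → ∃ x, r x := by
    intro r hr; by_contra hx; push Not at hx; exact hr (rs_eq_empty hx)
  obtain ⟨a, ha⟩ := ex n1
  obtain ⟨b, hb⟩ := ex n2
  obtain ⟨c, hc⟩ := ex n3
  obtain ⟨d, hd⟩ := ex n4
  have hcd := (h2' c d hc hd).le
  rcases h1 c with pc | qc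
  · have pd : p d := (h1 d).resolve_right fun qd => (h2 _ _ pc qd).1 hcd
    rcases h1' b with hb' | hb'
    · exact (h2 _ _ pd hb).2 (h2' _ _ hb' hd).le
    · exact (h2 _ _ pc hb).1 (h2' _ _ hc hb').le
  · have qd : q d := (h1 d).resolve_left fun pd => (h2 _ _ pd qc).2 hcd
    rcases h1' a with ha' | ha'
    · exact (h2 _ _ ha qd).1 (h2' _ _ ha' hd).le
    · exact (h2 _ _ ha qc).2 (h2' _ _ hc ha').le

theorem sp_factor {A : Type} {W : Pomset A} (hW : W.IsSP) : ∀ U V : Pomset A,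
    (W = Pomset.seq U V → U.IsSP ∧ V.IsSP) ∧ (W = Pomset.par U V → U.IsSP ∧ V.IsSP) := by
  induction hW with
  | empty =>
    intro U V
    constructor
    · intro h; obtain ⟨rfl, rfl⟩ := seq_eq_empty h; exact ⟨.empty, .empty⟩
    · intro h; obtain ⟨rfl, rfl⟩ := par_eq_empty h; exact ⟨.empty, .empty⟩
  | single a =>
    intro U V
    constructor
    · intro h
      rcases seq_eq_single h with rfl | rfl
      · rw [empty_seq] at h; subst h; exact ⟨.empty, .single a⟩
      · rw [seq_empty] at h; subst h; exact ⟨.single a, .empty⟩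
    · intro h
      rcases par_eq_single h with rfl | rfl
      · rw [empty_par] at h; subst h; exact ⟨.empty, .single a⟩
      · rw [par_empty] at h; subst h; exact ⟨.single a, .empty⟩
  | @seq P Q hP hQ ihP ihQ =>
    intro U V
    constructor
    · intro h
      rcases levi h with ⟨Y, rfl, h2⟩ | ⟨Y, h1, rfl⟩
      · have := (ihQ _ _).1 h2; exact ⟨.seq hP this.1, this.2⟩
      · have := (ihP _ _).1 h1; exact ⟨this.1, .seq this.2 hQ⟩
    · intro h
      rcases par_eq_seq h.symm with rfl | rfl | rfl | rfl
      · rw [empty_par] at h; subst h; exact ⟨.empty, .seq hP hQ⟩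
      · rw [par_empty] at h; subst h; exact ⟨.seq hP hQ, .empty⟩
      · rw [empty_seq] at h; exact (ihQ _ _).2 h
      · rw [seq_empty] at h; exact (ihP _ _).2 h
  | @par P Q hP hQ ihP ihQ =>
    intro U V
    constructor
    · intro h
      rcases par_eq_seq h with rfl | rfl | rfl | rfl
      · rw [empty_par] at h; exact (ihQ _ _).1 h
      · rw [par_empty] at h; exact (ihP _ _).1 h
      · rw [empty_seq] at h; subst h; exact ⟨.empty, .par hP hQ⟩
      · rw [seq_empty] at h; subst h; exact ⟨.par hP hQ, .empty⟩
    · intro h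
      obtain ⟨X₁, X₂, Z₁, Z₂, h1, h2, rfl, rfl⟩ := par_refine h
      have a := (ihP _ _).2 h1
      have b := (ihQ _ _).2 h2
      exact ⟨.par a.1 b.1, .par a.2 b.2⟩

end CKAH

namespace CKAH

open Classical

/-- Functions on pomsets given by series-parallel contexts. -/
inductive GC {A : Type} : (Pomset A → Pomset A) → Prop
  | star : GC (fun X => X)
  | seqL {D f} : Pomset.IsSP D → GC f → GC (fun X => Pomset.seq D (f X))
  | seqR {D f} : Pomset.IsSP D → GC f → GC (fun X => Pomset.seq (f X) D)
  | par {D f} : Pomset.IsSP D → GC f → GC (fun X => Pomset.par D (f X))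

theorem GC.comp {A : Type} {f g : Pomset A → Pomset A} (hf : GC f) (hg : GC g) :
    GC (fun X => f (g X)) := by
  induction hf with
  | star => exact hg
  | seqL hD _ ih => exact GC.seqL hD ih
  | seqR hD _ ih => exact GC.seqR hD ih
  | par hD _ ih => exact GC.par hD ih

theorem GC.parR {A : Type} {D : Pomset A} {f : Pomset A → Pomset A} (hD : D.IsSP) (hf : GC f) :
    GC (fun X => Pomset.par (f X) D) := by
  have := GC.par hD hf
  simpa only [par_comm D] using this

theorem GC.isSP {A : Type} {f : Pomset A → Pomset A} (hf : GC f) {X : Pomset A} (hX : X.IsSP) :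
    (f X).IsSP := by
  induction hf with
  | star => exact hX
  | seqL hD _ ih => exact .seq hD ih
  | seqR hD _ ih => exact .seq ih hD
  | par hD _ ih => exact .par hD ih

theorem spSub.isSP {A : Type} {U V : Pomset A} (h : spSub U V) : U.IsSP ∧ V.IsSP := by
  induction h with
  | refl h => exact ⟨h, h⟩
  | trans _ _ ih1 ih2 => exact ⟨ih1.1, ih2.2⟩
  | seqCong _ _ ih1 ih2 => exact ⟨.seq ih1.1 ih2.1, .seq ih1.2 ih2.2⟩
  | parCong _ _ ih1 ih2 => exact ⟨.par ih1.1 ih2.1, .par ih1.2 ih2.2⟩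
  | exch h1 h2 h3 h4 => exact ⟨.seq (.par h1 h2) (.par h3 h4), .par (.seq h1 h3) (.seq h2 h4)⟩

/-- Pointwise order of context functions. -/
def fle {A : Type} (f g : Pomset A → Pomset A) : Prop :=
  ∀ X : Pomset A, X.IsSP → spSub (f X) (g X)

/-- `(U∥X)·V ⊑ (U·V)∥X` -/
theorem exchA {A : Type} {U V X : Pomset A} (hU : U.IsSP) (hV : V.IsSP) (hX : X.IsSP) :
    spSub (Pomset.seq (Pomset.par U X) V) (Pomset.par (Pomset.seq U V) X) := by
  have := spSub.exch hU hX hV Pomset.IsSP.empty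
  rwa [par_empty, seq_empty] at this

/-- `X·(U∥V) ⊑ U∥(X·V)` -/
theorem exchB {A : Type} {U V X : Pomset A} (hU : U.IsSP) (hV : V.IsSP) (hX : X.IsSP) :
    spSub (Pomset.seq X (Pomset.par U V)) (Pomset.par U (Pomset.seq X V)) := by
  have := spSub.exch Pomset.IsSP.empty hX hU hV
  rwa [empty_par, empty_seq] at this

/-- `(U∥V)·X ⊑ U∥(V·X)` -/
theorem exchC {A : Type} {U V X : Pomset A} (hU : U.IsSP) (hV : V.IsSP) (hX : X.IsSP) :
    spSub (Pomset.seq (Pomset.par U V) X) (Pomset.par U (Pomset.seq V X)) := by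
  have := spSub.exch hU hV Pomset.IsSP.empty hX
  rwa [empty_par, seq_empty] at this

theorem GC.eq_empty {A : Type} {f : Pomset A → Pomset A} (hf : GC f) {x : Pomset A}
    (h : f x = Pomset.empty A) : x = Pomset.empty A ∧ ∀ X, f X = X := by
  induction hf with
  | star => exact ⟨h, fun _ => rfl⟩
  | seqL _ _ ih =>
    obtain ⟨rfl, h2⟩ := seq_eq_empty h.symm
    exact ⟨(ih h2).1, fun X => by dsimp only; rw [empty_seq, (ih h2).2]⟩
  | seqR _ _ ih =>
    obtain ⟨h2, rfl⟩ := seq_eq_empty h.symm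
    exact ⟨(ih h2).1, fun X => by dsimp only; rw [seq_empty, (ih h2).2]⟩
  | par _ _ ih =>
    obtain ⟨rfl, h2⟩ := par_eq_empty h.symm
    exact ⟨(ih h2).1, fun X => by dsimp only; rw [empty_par, (ih h2).2]⟩

/-- Pomsets with at most one point. -/
def Small {A : Type} (x : Pomset A) : Prop := x = Pomset.empty A ∨ ∃ a, x = Pomset.single a

theorem Small.isSP {A : Type} {x : Pomset A} (h : Small x) : x.IsSP := by
  rcases h with rfl | ⟨a, rfl⟩
  · exact .empty
  · exact .single a

theorem Small.seq {A : Type} {x U V : Pomset A} (hx : Small x) (h : x = Pomset.seq U V) :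
    U = Pomset.empty A ∨ V = Pomset.empty A := by
  rcases hx with rfl | ⟨a, rfl⟩
  · exact Or.inl (seq_eq_empty h).1
  · exact seq_eq_single h

theorem Small.par {A : Type} {x U V : Pomset A} (hx : Small x) (h : x = Pomset.par U V) :
    U = Pomset.empty A ∨ V = Pomset.empty A := by
  rcases hx with rfl | ⟨a, rfl⟩
  · exact Or.inl (par_eq_empty h).1
  · exact par_eq_single h

/-- Decomposition of a context whose instance is a sequential composition. -/
def SeqDec {A : Type} (x : Pomset A) (f : Pomset A → Pomset A) (V W : Pomset A) : Prop :=
  (∃ g, GC g ∧ g x = V ∧ fle (fun X => Pomset.seq (g X) W) f) ∨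
  (∃ g, GC g ∧ g x = W ∧ fle (fun X => Pomset.seq V (g X)) f)

theorem fle_of_eq {A : Type} {f g : Pomset A → Pomset A} (hf : GC f) (h : ∀ X, f X = g X) :
    fle f g := fun X hX => by
  rw [← h]; exact .refl (hf.isSP hX)

theorem GC.seqDec {A : Type} {x : Pomset A} (hx : Small x) {f : Pomset A → Pomset A}
    (hf : GC f) : ∀ V W, f x = Pomset.seq V W → SeqDec x f V W := by
  have key : ∀ (g : Pomset A → Pomset A), GC g → ∀ V W, g x = Pomset.seq V W →
      (V = Pomset.empty A ∨ W = Pomset.empty A) → SeqDec x g V W := by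
    intro g hg V W h h'
    rcases h' with rfl | rfl
    · rw [empty_seq] at h
      refine Or.inr ⟨g, hg, h, fle_of_eq (hg.seqL .empty) fun X => empty_seq _⟩
    · rw [seq_empty] at h
      refine Or.inl ⟨g, hg, h, fle_of_eq (hg.seqR .empty) fun X => seq_empty _⟩
  induction hf with
  | star => intro V W h; exact key _ .star V W h (hx.seq h)
  | @seqL D f hD hf ih =>
    intro V W h
    rcases levi h with ⟨Y, rfl, h2⟩ | ⟨Y, rfl, rfl⟩
    · rcases ih _ _ h2 with ⟨g, hg, rfl, hle⟩ | ⟨g, hg, rfl, hle⟩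
      · refine Or.inl ⟨_, hg.seqL hD, rfl, fun X hX => ?_⟩
        simp only [seq_assoc]
        exact .seqCong (.refl hD) (hle X hX)
      · refine Or.inr ⟨g, hg, rfl, fun X hX => ?_⟩
        simp only [seq_assoc]
        exact .seqCong (.refl hD) (hle X hX)
    · have hs := (sp_factor hD _ _).1 rfl
      refine Or.inr ⟨_, hf.seqL hs.2, rfl, fle_of_eq ((hf.seqL hs.2).seqL hs.1) fun X => ?_⟩
      rw [seq_assoc]
  | @seqR D f hD hf ih =>
    intro V W h
    rcases levi h with ⟨Y, rfl, rfl⟩ | ⟨Y, h2, rfl⟩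
    · have hs := (sp_factor hD _ _).1 rfl
      refine Or.inl ⟨_, hf.seqR hs.1, rfl, fle_of_eq ((hf.seqR hs.1).seqR hs.2) fun X => ?_⟩
      rw [seq_assoc]
    · rcases ih _ _ h2 with ⟨g, hg, rfl, hle⟩ | ⟨g, hg, rfl, hle⟩
      · refine Or.inl ⟨g, hg, rfl, fun X hX => ?_⟩
        simp only [← seq_assoc]
        exact .seqCong (hle X hX) (.refl hD)
      · refine Or.inr ⟨_, hg.seqR hD, rfl, fun X hX => ?_⟩
        simp only [← seq_assoc]
        exact .seqCong (hle X hX) (.refl hD)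
  | @par D f hD hf ih =>
    intro V W h
    dsimp only at h
    rcases par_eq_seq h with rfl | h0 | hVW
    · rw [empty_par] at h
      simpa only [empty_par] using ih _ _ h
    · rw [h0, par_empty] at h
      subst h
      have hs := (sp_factor hD _ _).1 rfl
      refine Or.inl ⟨_, hf.par hs.1, by rw [h0, par_empty], fun X hX => ?_⟩
      exact exchA hs.1 hs.2 (hf.isSP hX)
    · exact key _ (hf.par hD) V W h hVW

/-- Decomposition of a context whose instance is a parallel composition. -/
def ParDec {A : Type} (x : Pomset A) (f : Pomset A → Pomset A) (V W : Pomset A) : Prop :=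
  (∃ g, GC g ∧ g x = V ∧ fle (fun X => Pomset.par (g X) W) f) ∨
  (∃ g, GC g ∧ g x = W ∧ fle (fun X => Pomset.par V (g X)) f) ∨
  (x = Pomset.empty A ∧ fle (fun X => Pomset.seq X (Pomset.par V W)) f) ∨
  (x = Pomset.empty A ∧ fle (fun X => Pomset.seq (Pomset.par V W) X) f)

theorem GC.parDec {A : Type} {x : Pomset A} (hx : Small x) {f : Pomset A → Pomset A}
    (hf : GC f) : ∀ V W, f x = Pomset.par V W → ParDec x f V W := by
  have key : ∀ (g : Pomset A → Pomset A), GC g → ∀ V W, g x = Pomset.par V W →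
      (V = Pomset.empty A ∨ W = Pomset.empty A) → ParDec x g V W := by
    intro g hg V W h h'
    rcases h' with rfl | rfl
    · rw [empty_par] at h
      refine Or.inr (Or.inl ⟨g, hg, h, fle_of_eq (hg.par .empty) fun X => empty_par _⟩)
    · rw [par_empty] at h
      refine Or.inl ⟨g, hg, h, fle_of_eq (hg.parR .empty) fun X => par_empty _⟩
  induction hf with
  | star => intro V W h; exact key _ .star V W h (hx.par h)
  | @seqL D f hD hf ih =>
    intro V W h
    dsimp only at h
    rcases par_eq_seq h.symm with hV | hW | rfl | h0
    · exact key _ (hf.seqL hD) V W h (.inl hV)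
    · exact key _ (hf.seqL hD) V W h (.inr hW)
    · rw [empty_seq] at h
      simpa only [empty_seq] using ih _ _ h
    · rw [h0, seq_empty] at h
      subst h
      obtain ⟨rfl, hid⟩ := hf.eq_empty h0
      refine Or.inr (Or.inr (Or.inr ⟨rfl, fle_of_eq (GC.star.seqL hD) fun X => ?_⟩))
      simp only [hid]
  | @seqR D f hD hf ih =>
    intro V W h
    dsimp only at h
    rcases par_eq_seq h.symm with hV | hW | h0 | rfl
    · exact key _ (hf.seqR hD) V W h (.inl hV)
    · exact key _ (hf.seqR hD) V W h (.inr hW)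
    · rw [h0, empty_seq] at h
      subst h
      obtain ⟨rfl, hid⟩ := hf.eq_empty h0
      refine Or.inr (Or.inr (Or.inl ⟨rfl, fle_of_eq (GC.star.seqR hD) fun X => ?_⟩))
      simp only [hid]
    · rw [seq_empty] at h
      simpa only [seq_empty] using ih _ _ h
  | @par D f hD hf ih =>
    intro V W h
    obtain ⟨X₁, X₂, Z₁, Z₂, rfl, h2, rfl, rfl⟩ := par_refine h
    have hs := (sp_factor hD _ _).2 rfl
    have hz := (sp_factor (hf.isSP hx.isSP) _ _).2 h2
    have swap : Pomset.par (Pomset.par X₁ Z₁) (Pomset.par X₂ Z₂) =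
        Pomset.par (Pomset.par X₁ X₂) (Pomset.par Z₁ Z₂) := by
      rw [par_assoc, par_assoc, ← par_assoc Z₁, par_comm Z₁ X₂, par_assoc X₂]
    rcases ih _ _ h2 with ⟨g, hg, rfl, hle⟩ | ⟨g, hg, rfl, hle⟩ | ⟨rfl, hle⟩ | ⟨rfl, hle⟩
    · refine Or.inl ⟨_, hg.par hs.1, rfl, fun X hX => ?_⟩
      have e : Pomset.par (Pomset.par X₁ (g X)) (Pomset.par X₂ Z₂) =
          Pomset.par (Pomset.par X₁ X₂) (Pomset.par (g X) Z₂) := by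
        rw [par_assoc, par_assoc, ← par_assoc (g X), par_comm (g X) X₂, par_assoc X₂]
      simp only [e]
      exact .parCong (.refl hD) (hle X hX)
    · refine Or.inr (Or.inl ⟨_, hg.par hs.2, rfl, fun X hX => ?_⟩)
      have e : Pomset.par (Pomset.par X₁ Z₁) (Pomset.par X₂ (g X)) =
          Pomset.par (Pomset.par X₁ X₂) (Pomset.par Z₁ (g X)) := by
        rw [par_assoc, par_assoc, ← par_assoc Z₁, par_comm Z₁ X₂, par_assoc X₂]
      simp only [e]
      exact .parCong (.refl hD) (hle X hX)
    · refine Or.inr (Or.inr (Or.inl ⟨rfl, fun X hX => ?_⟩))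
      simp only [swap]
      exact (exchB hD (.par hz.1 hz.2) hX).trans (.parCong (.refl hD) (hle X hX))
    · refine Or.inr (Or.inr (Or.inr ⟨rfl, fun X hX => ?_⟩))
      simp only [swap]
      exact (exchC hD (.par hz.1 hz.2) hX).trans (.parCong (.refl hD) (hle X hX))

theorem fle.trans {A : Type} {f g h : Pomset A → Pomset A} (h1 : fle f g) (h2 : fle g h) :
    fle f h := fun X hX => (h1 X hX).trans (h2 X hX)

/-- Pulling a context back along a subsumption. -/
theorem pull {A : Type} {x : Pomset A} (hx : Small x) {U V : Pomset A} (h : spSub U V) :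
    ∀ f, GC f → f x = V → ∃ g, GC g ∧ g x = U ∧ fle g f := by
  induction h with
  | refl _ => intro f hf h; exact ⟨f, hf, h, fle_of_eq hf fun _ => rfl⟩
  | trans _ _ ih1 ih2 =>
    intro f hf h
    obtain ⟨g, hg, h1, l1⟩ := ih2 f hf h
    obtain ⟨k, hk, h2, l2⟩ := ih1 g hg h1
    exact ⟨k, hk, h2, l2.trans l1⟩
  | @seqCong U V U' V' s1 s2 ih1 ih2 =>
    intro f hf h
    rcases hf.seqDec hx _ _ h with ⟨g, hg, e, l⟩ | ⟨g, hg, e, l⟩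
    · obtain ⟨k, hk, rfl, l'⟩ := ih1 g hg e
      exact ⟨_, hk.seqR s2.isSP.1, rfl, fun X hX => (spSub.seqCong (l' X hX) s2).trans (l X hX)⟩
    · obtain ⟨k, hk, rfl, l'⟩ := ih2 g hg e
      exact ⟨_, hk.seqL s1.isSP.1, rfl, fun X hX => (spSub.seqCong s1 (l' X hX)).trans (l X hX)⟩
  | @parCong U V U' V' s1 s2 ih1 ih2 =>
    intro f hf h
    rcases hf.parDec hx _ _ h with ⟨g, hg, e, l⟩ | ⟨g, hg, e, l⟩ | ⟨rfl, l⟩ | ⟨rfl, l⟩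
    · obtain ⟨k, hk, rfl, l'⟩ := ih1 g hg e
      exact ⟨_, hk.parR s2.isSP.1, rfl, fun X hX => (spSub.parCong (l' X hX) s2).trans (l X hX)⟩
    · obtain ⟨k, hk, rfl, l'⟩ := ih2 g hg e
      exact ⟨_, hk.par s1.isSP.1, rfl, fun X hX => (spSub.parCong s1 (l' X hX)).trans (l X hX)⟩
    · exact ⟨_, GC.star.seqR (.par s1.isSP.1 s2.isSP.1), empty_seq _, fun X hX =>
        (spSub.seqCong (.refl hX) (.parCong s1 s2)).trans (l X hX)⟩
    · exact ⟨_, GC.star.seqL (.par s1.isSP.1 s2.isSP.1), seq_empty _, fun X hX =>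
        (spSub.seqCong (.parCong s1 s2) (.refl hX)).trans (l X hX)⟩
  | @exch U V W X hU hV hW hX =>
    intro f hf h
    rcases hf.parDec hx _ _ h with ⟨g, hg, e, l⟩ | ⟨g, hg, e, l⟩ | ⟨rfl, l⟩ | ⟨rfl, l⟩
    · rcases hg.seqDec hx _ _ e with ⟨k, hk, rfl, l'⟩ | ⟨k, hk, rfl, l'⟩
      · refine ⟨_, (hk.parR hV).seqR (.par hW hX), rfl, fun Y hY => ?_⟩
        exact ((spSub.exch (hk.isSP hY) hV hW hX).trans
          (.parCong (l' Y hY) (.refl (.seq hV hX)))).trans (l Y hY)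
      · refine ⟨_, (hk.parR hX).seqL (.par hU hV), rfl, fun Y hY => ?_⟩
        exact ((spSub.exch hU hV (hk.isSP hY) hX).trans
          (.parCong (l' Y hY) (.refl (.seq hV hX)))).trans (l Y hY)
    · rcases hg.seqDec hx _ _ e with ⟨k, hk, rfl, l'⟩ | ⟨k, hk, rfl, l'⟩
      · refine ⟨_, (hk.par hU).seqR (.par hW hX), rfl, fun Y hY => ?_⟩
        exact ((spSub.exch hU (hk.isSP hY) hW hX).trans
          (.parCong (.refl (.seq hU hW)) (l' Y hY))).trans (l Y hY)
      · refine ⟨_, (hk.par hW).seqL (.par hU hV), rfl, fun Y hY => ?_⟩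
        exact ((spSub.exch hU hV hW (hk.isSP hY)).trans
          (.parCong (.refl (.seq hU hW)) (l' Y hY))).trans (l Y hY)
    · exact ⟨_, GC.star.seqR (.seq (.par hU hV) (.par hW hX)), empty_seq _, fun Y hY =>
        (spSub.seqCong (.refl hY) (.exch hU hV hW hX)).trans (l Y hY)⟩
    · exact ⟨_, GC.star.seqL (.seq (.par hU hV) (.par hW hX)), seq_empty _, fun Y hY =>
        (spSub.seqCong (.exch hU hV hW hX) (.refl hY)).trans (l Y hY)⟩

theorem Term.lang_sp {A : Type} (e : Term A) : ∀ U ∈ e.lang, U.IsSP := by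
  induction e with
  | zero => intro U h; exact h.elim
  | one => rintro U rfl; exact .empty
  | var a => rintro U rfl; exact .single a
  | add e f ihe ihf => rintro U (h | h); exacts [ihe U h, ihf U h]
  | seq e f ihe ihf => rintro _ ⟨U, hU, V, hV, rfl⟩; exact .seq (ihe U hU) (ihf V hV)
  | par e f ihe ihf => rintro _ ⟨U, hU, V, hV, rfl⟩; exact .par (ihe U hU) (ihf V hV)
  | star e ih =>
    rintro U h
    obtain ⟨n, hn⟩ := Set.mem_iUnion.1 h
    clear h
    induction n generalizing U with
    | zero => cases hn; exact .empty
    | succ n ihn => obtain ⟨U, hU, V, hV, rfl⟩ := hn; exact .seq (ihn U hU) (ih V hV)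

theorem exists_term {A : Type} {U : Pomset A} (h : U.IsSP) : ∃ e : Term A, e.lang = {U} := by
  induction h with
  | empty => exact ⟨.one, rfl⟩
  | single a => exact ⟨.var a, rfl⟩
  | seq _ _ ih1 ih2 =>
    obtain ⟨e, he⟩ := ih1
    obtain ⟨f, hf⟩ := ih2
    refine ⟨.seq e f, ?_⟩
    ext W; simp [Term.lang, Lang.seq, he, hf]
  | par _ _ ih1 ih2 =>
    obtain ⟨e, he⟩ := ih1
    obtain ⟨f, hf⟩ := ih2
    refine ⟨.par e f, ?_⟩
    ext W; simp [Term.lang, Lang.par, he, hf]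

end CKAH

namespace CKAH

open Classical

theorem existsUnique_sum {α β γ : Type} (f : α → Option γ) (g : β → Option γ) :
    (∃! s : α ⊕ β, Sum.elim f g s = none) ↔
      ((∃! s, f s = none) ∧ ∀ x, g x ≠ none) ∨ ((∀ x, f x ≠ none) ∧ ∃! s, g s = none) := by
  constructor
  · rintro ⟨(s | s), hs, hu⟩
    · refine Or.inl ⟨⟨s, hs, fun y hy => ?_⟩, fun x hx => ?_⟩
      · exact Sum.inl_injective (hu (Sum.inl y) hy)
      · exact Sum.inr_ne_inl (hu (Sum.inr x) hx)
    · refine Or.inr ⟨fun x hx => ?_, ⟨s, hs, fun y hy => ?_⟩⟩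
      · exact Sum.inl_ne_inr (hu (Sum.inl x) hx)
      · exact Sum.inr_injective (hu (Sum.inr y) hy)
  · rintro (⟨⟨s, hs, hu⟩, hn⟩ | ⟨hn, ⟨s, hs, hu⟩⟩)
    · refine ⟨Sum.inl s, hs, ?_⟩
      rintro (y | y) hy
      · exact congrArg Sum.inl (hu y hy)
      · exact (hn y hy).elim
    · refine ⟨Sum.inr s, hs, ?_⟩
      rintro (y | y) hy
      · exact (hn y hy).elim
      · exact congrArg Sum.inr (hu y hy)

def NoStar {A : Type} (C : Pomset (Option A)) : Prop := C.Over {x | x ≠ none}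

theorem isCtx_seq {A : Type} (P Q : Pomset (Option A)) :
    (Pomset.seq P Q).IsCtx ↔ (P.IsCtx ∧ NoStar Q) ∨ (NoStar P ∧ Q.IsCtx) := by
  induction P using Quotient.inductionOn with | _ p => ?_
  induction Q using Quotient.inductionOn with | _ q => ?_
  exact existsUnique_sum p.lab q.lab

theorem isCtx_par {A : Type} (P Q : Pomset (Option A)) :
    (Pomset.par P Q).IsCtx ↔ (P.IsCtx ∧ NoStar Q) ∨ (NoStar P ∧ Q.IsCtx) := by
  induction P using Quotient.inductionOn with | _ p => ?_
  induction Q using Quotient.inductionOn with | _ q => ?_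
  exact existsUnique_sum p.lab q.lab

theorem noStar_seq {A : Type} {P Q : Pomset (Option A)} (h : NoStar (Pomset.seq P Q)) :
    NoStar P ∧ NoStar Q := by
  induction P using Quotient.inductionOn with | _ p => ?_
  induction Q using Quotient.inductionOn with | _ q => ?_
  exact ⟨fun x => h (toLex (Sum.inl x)), fun x => h (toLex (Sum.inr x))⟩

theorem noStar_par {A : Type} {P Q : Pomset (Option A)} (h : NoStar (Pomset.par P Q)) :
    NoStar P ∧ NoStar Q := by
  induction P using Quotient.inductionOn with | _ p => ?_
  induction Q using Quotient.inductionOn with | _ q => ?_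
  exact ⟨fun x => h (Sum.inl x), fun x => h (Sum.inr x)⟩

theorem noStar_map {A : Type} (U : Pomset A) : NoStar (Pomset.map some U) := by
  induction U using Quotient.inductionOn with | _ u => ?_
  exact fun x => Option.some_ne_none (u.lab x)

theorem map_seq {A B : Type} (f : A → B) (U V : Pomset A) :
    Pomset.map f (Pomset.seq U V) = Pomset.seq (Pomset.map f U) (Pomset.map f V) := by
  induction U using Quotient.inductionOn with | _ u => ?_
  induction V using Quotient.inductionOn with | _ v => ?_
  refine mk_eq_of (u := LPoset.mapL f (LPoset.seqL u v))
    (v := LPoset.seqL (LPoset.mapL f u) (LPoset.mapL f v)) (OrderIso.refl _) ?_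
  rintro (x | x) <;> rfl

theorem map_par {A B : Type} (f : A → B) (U V : Pomset A) :
    Pomset.map f (Pomset.par U V) = Pomset.par (Pomset.map f U) (Pomset.map f V) := by
  induction U using Quotient.inductionOn with | _ u => ?_
  induction V using Quotient.inductionOn with | _ v => ?_
  refine mk_eq_of (u := LPoset.mapL f (LPoset.parL u v))
    (v := LPoset.parL (LPoset.mapL f u) (LPoset.mapL f v)) (OrderIso.refl _) ?_
  rintro (x | x) <;> rfl

theorem map_empty {A B : Type} (f : A → B) :
    Pomset.map f (Pomset.empty A) = Pomset.empty B :=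
  mk_eq_empty (w := LPoset.mapL f (LPoset.emptyL A)) (fun x => Fin.elim0 x)

theorem isSP_map {A B : Type} (f : A → B) {U : Pomset A} (h : U.IsSP) :
    (Pomset.map f U).IsSP := by
  induction h with
  | empty => rw [map_empty]; exact .empty
  | single a => exact .single (f a)
  | seq _ _ h1 h2 => rw [map_seq]; exact .seq h1 h2
  | par _ _ h1 h2 => rw [map_par]; exact .par h1 h2

theorem noStar_sp {A : Type} {C : Pomset (Option A)} (h : C.IsSP) :
    NoStar C → ∃ U : Pomset A, U.IsSP ∧ C = Pomset.map some U := by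
  induction h with
  | empty => intro _; exact ⟨_, .empty, (map_empty _).symm⟩
  | single a =>
    intro h
    cases a with
    | none => exact absurd rfl (h PUnit.unit)
    | some a => exact ⟨_, .single a, rfl⟩
  | seq _ _ h1 h2 =>
    intro h
    obtain ⟨U, hU, rfl⟩ := h1 (noStar_seq h).1
    obtain ⟨V, hV, rfl⟩ := h2 (noStar_seq h).2
    exact ⟨_, .seq hU hV, (map_seq _ _ _).symm⟩
  | par _ _ h1 h2 =>
    intro h
    obtain ⟨U, hU, rfl⟩ := h1 (noStar_par h).1
    obtain ⟨V, hV, rfl⟩ := h2 (noStar_par h).2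
    exact ⟨_, .par hU hV, (map_par _ _ _).symm⟩

theorem ins_star {A : Type} (X : Pomset A) : (Pomset.single (none : Option A)).ins X = X := by
  induction X using Quotient.inductionOn with | _ x => ?_
  symm
  refine mk_eq_of_bij (u := x) (v := LPoset.insL (LPoset.singleL none) x) Sum.inr ?_ ?_ ?_
  · rintro (y | y)
    · exact absurd rfl y.prop
    · exact ⟨y, rfl⟩
  · intro a b; exact Iff.rfl
  · intro a; rfl

theorem ins_seqL {A : Type} (U : Pomset A) {C : Pomset (Option A)} (hC : C.IsCtx)
    (X : Pomset A) : (Pomset.seq (Pomset.map some U) C).ins X = Pomset.seq U (C.ins X) := by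
  have hctx := (isCtx_seq (Pomset.map some U) C).2 (Or.inr ⟨noStar_map U, hC⟩)
  induction U using Quotient.inductionOn with | _ u => ?_
  induction C using Quotient.inductionOn with | _ c => ?_
  induction X using Quotient.inductionOn with | _ x => ?_
  change c.uniqueStarL at hC
  change (LPoset.seqL (LPoset.mapL some u) c).uniqueStarL at hctx
  symm
  refine mk_eq_of_bij (u := LPoset.seqL u (LPoset.insL c x))
    (v := LPoset.insL (LPoset.seqL (LPoset.mapL some u) c) x)
    (fun z => Sum.elim (fun a => Sum.inl ⟨toLex (Sum.inl a), Option.some_ne_none _⟩)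
      (fun b => Sum.elim (fun y => Sum.inl ⟨toLex (Sum.inr y.val), y.prop⟩) Sum.inr b)
      (ofLex z)) ?_ ?_ ?_
  · rintro (⟨(y | y), hy⟩ | y)
    · exact ⟨toLex (Sum.inl y), rfl⟩
    · exact ⟨toLex (Sum.inr (Sum.inl ⟨y, hy⟩)), rfl⟩
    · exact ⟨toLex (Sum.inr (Sum.inr y)), rfl⟩
  · obtain ⟨s, hs, hsu⟩ := id hC
    rintro (a | (a | a)) (b | (b | b))
    · exact Sum.Lex.inl_le_inl_iff.trans Sum.Lex.inl_le_inl_iff.symm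
    · exact iff_of_true (Sum.Lex.inl_le_inr _ _) (Sum.Lex.inl_le_inr _ _)
    · exact iff_of_true ⟨hctx, toLex (Sum.inr s), hs, Sum.Lex.inl_le_inr _ _⟩
        (Sum.Lex.inl_le_inr _ _)
    · exact iff_of_false Sum.Lex.not_inr_le_inl Sum.Lex.not_inr_le_inl
    · exact Sum.Lex.inr_le_inr_iff.trans (Sum.Lex.inr_le_inr_iff (α := u.carrier)
        (β := (LPoset.insL c x).carrier) (a := Sum.inl a) (b := Sum.inl b)).symm
    · refine Iff.trans ?_ (Sum.Lex.inr_le_inr_iff (α := u.carrier)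
        (β := (LPoset.insL c x).carrier) (a := Sum.inl a) (b := Sum.inr b)).symm
      constructor
      · rintro ⟨-, (t | t), ht, hl⟩
        · exact absurd ht (Option.some_ne_none _)
        · exact ⟨hC, t, ht, Sum.Lex.inr_le_inr_iff.1 hl⟩
      · rintro ⟨-, t, ht, hl⟩
        exact ⟨hctx, toLex (Sum.inr t), ht, Sum.Lex.inr_le_inr_iff.2 hl⟩
    · refine iff_of_false ?_ Sum.Lex.not_inr_le_inl
      rintro ⟨-, (t | t), ht, hl⟩
      · exact absurd ht (Option.some_ne_none _)
      · exact Sum.Lex.not_inr_le_inl hl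
    · refine Iff.trans ?_ (Sum.Lex.inr_le_inr_iff (α := u.carrier)
        (β := (LPoset.insL c x).carrier) (a := Sum.inr a) (b := Sum.inl b)).symm
      constructor
      · rintro ⟨-, (t | t), ht, hl⟩
        · exact absurd ht (Option.some_ne_none _)
        · exact ⟨hC, t, ht, Sum.Lex.inr_le_inr_iff.1 hl⟩
      · rintro ⟨-, t, ht, hl⟩
        exact ⟨hctx, toLex (Sum.inr t), ht, Sum.Lex.inr_le_inr_iff.2 hl⟩
    · exact (Sum.Lex.inr_le_inr_iff (α := u.carrier)
        (β := (LPoset.insL c x).carrier) (a := Sum.inr a) (b := Sum.inr b)).symm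
  · rintro (a | (a | a)) <;> rfl

theorem ins_seqR {A : Type} (U : Pomset A) {C : Pomset (Option A)} (hC : C.IsCtx)
    (X : Pomset A) : (Pomset.seq C (Pomset.map some U)).ins X = Pomset.seq (C.ins X) U := by
  have hctx := (isCtx_seq C (Pomset.map some U)).2 (Or.inl ⟨hC, noStar_map U⟩)
  induction U using Quotient.inductionOn with | _ u => ?_
  induction C using Quotient.inductionOn with | _ c => ?_
  induction X using Quotient.inductionOn with | _ x => ?_
  change c.uniqueStarL at hC
  change (LPoset.seqL c (LPoset.mapL some u)).uniqueStarL at hctx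
  symm
  refine mk_eq_of_bij (u := LPoset.seqL (LPoset.insL c x) u)
    (v := LPoset.insL (LPoset.seqL c (LPoset.mapL some u)) x)
    (fun z => Sum.elim
      (fun b => Sum.elim (fun y => Sum.inl ⟨toLex (Sum.inl y.val), y.prop⟩) Sum.inr b)
      (fun a => Sum.inl ⟨toLex (Sum.inr a), Option.some_ne_none _⟩)
      (ofLex z)) ?_ ?_ ?_
  · rintro (⟨(y | y), hy⟩ | y)
    · exact ⟨toLex (Sum.inl (Sum.inl ⟨y, hy⟩)), rfl⟩
    · exact ⟨toLex (Sum.inr y), rfl⟩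
    · exact ⟨toLex (Sum.inl (Sum.inr y)), rfl⟩
  · obtain ⟨s, hs, hsu⟩ := id hC
    rintro ((a | a) | a) ((b | b) | b)
    · exact Sum.Lex.inl_le_inl_iff.trans (Sum.Lex.inl_le_inl_iff (β := u.carrier)
        (α := (LPoset.insL c x).carrier) (a := Sum.inl a) (b := Sum.inl b)).symm
    · refine Iff.trans ?_ (Sum.Lex.inl_le_inl_iff (β := u.carrier)
        (α := (LPoset.insL c x).carrier) (a := Sum.inl a) (b := Sum.inr b)).symm
      constructor
      · rintro ⟨-, (t | t), ht, hl⟩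
        · exact ⟨hC, t, ht, Sum.Lex.inl_le_inl_iff.1 hl⟩
        · exact absurd ht (Option.some_ne_none _)
      · rintro ⟨-, t, ht, hl⟩
        exact ⟨hctx, toLex (Sum.inl t), ht, Sum.Lex.inl_le_inl_iff.2 hl⟩
    · exact iff_of_true (Sum.Lex.inl_le_inr _ _) (Sum.Lex.inl_le_inr _ _)
    · refine Iff.trans ?_ (Sum.Lex.inl_le_inl_iff (β := u.carrier)
        (α := (LPoset.insL c x).carrier) (a := Sum.inr a) (b := Sum.inl b)).symm
      constructor
      · rintro ⟨-, (t | t), ht, hl⟩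
        · exact ⟨hC, t, ht, Sum.Lex.inl_le_inl_iff.1 hl⟩
        · exact absurd ht (Option.some_ne_none _)
      · rintro ⟨-, t, ht, hl⟩
        exact ⟨hctx, toLex (Sum.inl t), ht, Sum.Lex.inl_le_inl_iff.2 hl⟩
    · exact (Sum.Lex.inl_le_inl_iff (β := u.carrier)
        (α := (LPoset.insL c x).carrier) (a := Sum.inr a) (b := Sum.inr b)).symm
    · exact iff_of_true ⟨hctx, toLex (Sum.inl s), hs, Sum.Lex.inl_le_inr _ _⟩
        (Sum.Lex.inl_le_inr _ _)
    · exact iff_of_false Sum.Lex.not_inr_le_inl Sum.Lex.not_inr_le_inl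
    · refine iff_of_false ?_ Sum.Lex.not_inr_le_inl
      rintro ⟨-, (t | t), ht, hl⟩
      · exact Sum.Lex.not_inr_le_inl hl
      · exact absurd ht (Option.some_ne_none _)
    · exact Sum.Lex.inr_le_inr_iff.trans Sum.Lex.inr_le_inr_iff.symm
  · rintro ((a | a) | a) <;> rfl

theorem ins_par {A : Type} (U : Pomset A) {C : Pomset (Option A)} (hC : C.IsCtx)
    (X : Pomset A) : (Pomset.par (Pomset.map some U) C).ins X = Pomset.par U (C.ins X) := by
  have hctx := (isCtx_par (Pomset.map some U) C).2 (Or.inr ⟨noStar_map U, hC⟩)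
  induction U using Quotient.inductionOn with | _ u => ?_
  induction C using Quotient.inductionOn with | _ c => ?_
  induction X using Quotient.inductionOn with | _ x => ?_
  change c.uniqueStarL at hC
  change (LPoset.parL (LPoset.mapL some u) c).uniqueStarL at hctx
  symm
  refine mk_eq_of_bij (u := LPoset.parL u (LPoset.insL c x))
    (v := LPoset.insL (LPoset.parL (LPoset.mapL some u) c) x)
    (Sum.elim (fun a => Sum.inl ⟨Sum.inl a, Option.some_ne_none _⟩)
      (fun b => Sum.elim (fun y => Sum.inl ⟨Sum.inr y.val, y.prop⟩) Sum.inr b)) ?_ ?_ ?_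
  · rintro (⟨(y | y), hy⟩ | y)
    · exact ⟨Sum.inl y, rfl⟩
    · exact ⟨Sum.inr (Sum.inl ⟨y, hy⟩), rfl⟩
    · exact ⟨Sum.inr (Sum.inr y), rfl⟩
  · rintro (a | (a | a)) (b | (b | b))
    · exact Sum.inl_le_inl_iff.trans Sum.inl_le_inl_iff.symm
    · exact iff_of_false Sum.not_inl_le_inr Sum.not_inl_le_inr
    · refine iff_of_false ?_ Sum.not_inl_le_inr
      rintro ⟨-, (t | t), ht, hl⟩
      · exact absurd ht (Option.some_ne_none _)
      · exact Sum.not_inl_le_inr hl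
    · exact iff_of_false Sum.not_inr_le_inl Sum.not_inr_le_inl
    · exact Sum.inr_le_inr_iff.trans (Sum.inr_le_inr_iff (α := u.carrier)
        (β := (LPoset.insL c x).carrier) (a := Sum.inl a) (b := Sum.inl b)).symm
    · refine Iff.trans ?_ (Sum.inr_le_inr_iff (α := u.carrier)
        (β := (LPoset.insL c x).carrier) (a := Sum.inl a) (b := Sum.inr b)).symm
      constructor
      · rintro ⟨-, (t | t), ht, hl⟩
        · exact absurd ht (Option.some_ne_none _)
        · exact ⟨hC, t, ht, Sum.inr_le_inr_iff.1 hl⟩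
      · rintro ⟨-, t, ht, hl⟩
        exact ⟨hctx, Sum.inr t, ht, Sum.inr_le_inr_iff.2 hl⟩
    · refine iff_of_false ?_ Sum.not_inr_le_inl
      rintro ⟨-, (t | t), ht, hl⟩
      · exact absurd ht (Option.some_ne_none _)
      · exact Sum.not_inr_le_inl hl
    · refine Iff.trans ?_ (Sum.inr_le_inr_iff (α := u.carrier)
        (β := (LPoset.insL c x).carrier) (a := Sum.inr a) (b := Sum.inl b)).symm
      constructor
      · rintro ⟨-, (t | t), ht, hl⟩
        · exact absurd ht (Option.some_ne_none _)
        · exact ⟨hC, t, ht, Sum.inr_le_inr_iff.1 hl⟩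
      · rintro ⟨-, t, ht, hl⟩
        exact ⟨hctx, Sum.inr t, ht, Sum.inr_le_inr_iff.2 hl⟩
    · exact (Sum.inr_le_inr_iff (α := u.carrier)
        (β := (LPoset.insL c x).carrier) (a := Sum.inr a) (b := Sum.inr b)).symm
  · rintro (a | (a | a)) <;> rfl

theorem gc_of_ctx {A : Type} {C : Pomset (Option A)} (h : C.IsSP) :
    C.IsCtx → GC (fun X => C.ins X) := by
  induction h with
  | empty => rintro ⟨x, -⟩; exact Fin.elim0 x
  | single a =>
    intro h
    cases a with
    | none => simpa only [ins_star] using GC.star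
    | some a =>
      obtain ⟨x, hx, -⟩ := h
      exact absurd hx (Option.some_ne_none a)
  | seq hP hQ ihP ihQ =>
    intro h
    rcases (isCtx_seq _ _).1 h with ⟨h1, h2⟩ | ⟨h1, h2⟩
    · obtain ⟨V, hV, rfl⟩ := noStar_sp hQ h2
      simpa only [ins_seqR V h1] using GC.seqR hV (ihP h1)
    · obtain ⟨V, hV, rfl⟩ := noStar_sp hP h1
      simpa only [ins_seqL V h2] using GC.seqL hV (ihQ h2)
  | par hP hQ ihP ihQ =>
    intro h
    rcases (isCtx_par _ _).1 h with ⟨h1, h2⟩ | ⟨h1, h2⟩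
    · obtain ⟨V, hV, rfl⟩ := noStar_sp hQ h2
      rw [par_comm]
      simpa only [ins_par V h1] using GC.par hV (ihP h1)
    · obtain ⟨V, hV, rfl⟩ := noStar_sp hP h1
      simpa only [ins_par V h2] using GC.par hV (ihQ h2)

theorem ctx_of_gc {A : Type} {f : Pomset A → Pomset A} (h : GC f) :
    ∃ C : Pomset (Option A), C.IsSPCtx ∧ ∀ X, C.ins X = f X := by
  induction h with
  | star => exact ⟨Pomset.single none, ⟨⟨PUnit.unit, rfl, fun _ _ => rfl⟩, .single _⟩, ins_star⟩
  | @seqL D f hD _ ih =>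
    obtain ⟨C, hC, e⟩ := ih
    exact ⟨Pomset.seq (Pomset.map some D) C,
      ⟨(isCtx_seq _ _).2 (Or.inr ⟨noStar_map D, hC.1⟩), .seq (isSP_map _ hD) hC.2⟩,
      fun X => by rw [ins_seqL D hC.1, e]⟩
  | @seqR D f hD _ ih =>
    obtain ⟨C, hC, e⟩ := ih
    exact ⟨Pomset.seq C (Pomset.map some D),
      ⟨(isCtx_seq _ _).2 (Or.inl ⟨hC.1, noStar_map D⟩), .seq hC.2 (isSP_map _ hD)⟩,
      fun X => by rw [ins_seqR D hC.1, e]⟩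
  | @par D f hD _ ih =>
    obtain ⟨C, hC, e⟩ := ih
    exact ⟨Pomset.par (Pomset.map some D) C,
      ⟨(isCtx_par _ _).2 (Or.inr ⟨noStar_map D, hC.1⟩), .par (isSP_map _ hD) hC.2⟩,
      fun X => by rw [ins_par D hC.1, e]⟩

theorem exch_down {A : Type} (L : Lang A) {U V : Pomset A} (h : spSub U V) :
    ∀ f, GC f → closure (exch A) L (f V) → closure (exch A) L (f U) := by
  induction h with
  | refl _ => intro f _ h; exact h
  | trans _ _ ih1 ih2 => intro f hf h; exact ih1 f hf (ih2 f hf h)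
  | @seqCong U V U' V' s1 s2 ih1 ih2 =>
    intro f hf h
    have h1 := ih1 _ (hf.comp (GC.star.seqR s2.isSP.2)) h
    exact ih2 _ (hf.comp (GC.star.seqL s1.isSP.1)) h1
  | @parCong U V U' V' s1 s2 ih1 ih2 =>
    intro f hf h
    have h1 := ih1 _ (hf.comp (GC.star.parR s2.isSP.2)) h
    exact ih2 _ (hf.comp (GC.star.par s1.isSP.1)) h1
  | @exch U V W X hU hV hW hX =>
    intro f hf h
    obtain ⟨C, hC, e⟩ := ctx_of_gc hf
    obtain ⟨a, ha⟩ := exists_term hU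
    obtain ⟨b, hb⟩ := exists_term hV
    obtain ⟨c, hc⟩ := exists_term hW
    obtain ⟨d, hd⟩ := exists_term hX
    rw [← e] at h ⊢
    refine closure.step (e := .seq (.par a b) (.par c d)) (f := .par (.seq a c) (.seq b d))
      ?_ hC ?_ ?_
    · exact ⟨a, b, c, d, rfl⟩
    · intro Y hY
      have : Y = Pomset.par (Pomset.seq U W) (Pomset.seq V X) := by
        simpa [Term.lang, Lang.seq, Lang.par, ha, hb, hc, hd] using hY
      rw [this]; exact h
    · simp [Term.lang, Lang.seq, Lang.par, ha, hb, hc, hd]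

theorem main_aux {A : Type} {H : HypSet A}
    (hH : ∀ p ∈ H, p.1 = Term.one ∨ ∃ a : A, p.1 = Term.var a) (L : Lang A) {V : Pomset A}
    (h : closure H (cl (exch A) L) V) :
    ∀ U, spSub U V → closure H (cl (exch A) L) U := by
  induction h with
  | base h =>
    intro U hU
    exact .base (exch_down L hU _ .star h)
  | @step e f hef C hC hf Y hY ih =>
    intro U hU
    have hs : Small Y := by
      rcases hH _ hef with h | ⟨a, h⟩
      · dsimp only at h; subst h; exact Or.inl hY
      · dsimp only at h; subst h; exact Or.inr ⟨a, hY⟩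
    obtain ⟨g, hg, rfl, l⟩ := pull hs hU _ (gc_of_ctx hC.2 hC.1) rfl
    obtain ⟨C', hC', e'⟩ := ctx_of_gc hg
    rw [← e']
    refine closure.step hef hC' (fun W hW => ?_) hY
    rw [e']
    exact ih W hW _ (l W (f.lang_sp W hW))

end CKAH

namespace CKAH

/-- **Downward closure after `exch`**: if every hypothesis of `H` has left-hand side `1`
or a letter, and `L ⊆ SP`, then `cl_H(cl_exch(L))` is downward closed under `⊑^sp`. -/
theorem factorise_seq_exch (A : Type) (H : HypSet A)
    (hH : ∀ p ∈ H, p.1 = Term.one ∨ ∃ a : A, p.1 = Term.var a)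
    (L : Lang A) (hL : L ⊆ SPset A) (U V : Pomset A) (hU : U.IsSP) (hV : V.IsSP)
    (hsub : spSub U V) (hmem : V ∈ cl H (cl (exch A) L)) :
    U ∈ cl H (cl (exch A) L) := by
  exact main_aux hH L hmem U hsub

end CKAH
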